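/- Let s ∈ (0,1), u ∈ C_c^∞(ℝⁿ), and let U be its Caffarelli–Silvestre extension. Assume ∫₀^∞∫_{ℝⁿ} z^{1−2s} ( |∇_x² U(x,z)|² + |∇_x ∂_z U(x,z)|² ) dx dz < ∞. Then for every x ∈ ℝⁿ, ½ Λ^s( |∇u|² )(x) − ∇u(x) · ∇( Λ^s u )(x) = β_s ∫₀^∞ ( P_z^{(s)} ∗ ( |∇_x² U(·,z)|² + |∇_x ∂_z U(·,z)|² ) )(x) z^{1−2s} dz, where |∇u|² ∈ C_c^∞(ℝⁿ) is the squared Euclidean norm of the gradient and |∇_x² U|² is the squared Frobenius norm of the Hessian in the x-variables. -/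

import Mathlib

open MeasureTheory Filter Set
open scoped Topology ENNReal NNReal

noncomputable section

/-- `ℝⁿ` with the Euclidean norm. -/
abbrev En (n : ℕ) := EuclideanSpace ℝ (Fin n)

/-- The normalizing constant `p(n,s) = Γ(n/2+s)/(π^{n/2} Γ(s))` of the Poisson kernel. -/
def pns (n : ℕ) (s : ℝ) : ℝ :=
  Real.Gamma ((n : ℝ) / 2 + s) / (Real.pi ^ ((n : ℝ) / 2) * Real.Gamma s)

/-- The fractional Poisson kernel `P_z^{(s)}(x) = p(n,s) z^{2s} (|x|² + z²)^{-(n+2s)/2}`. -/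
def Pker (n : ℕ) (s z : ℝ) (x : En n) : ℝ :=
  pns n s * z ^ (2 * s) * (‖x‖ ^ 2 + z ^ 2) ^ (-((n : ℝ) + 2 * s) / 2)

/-- Convolution with the fractional Poisson kernel in the first variable, at fixed `z`. -/
def Pconv (n : ℕ) (s z : ℝ) (f : En n → ℝ) (x : En n) : ℝ :=
  ∫ y, Pker n s z (x - y) * f y

/-- The Caffarelli–Silvestre extension `U(x,z) = (P_z^{(s)} ∗ u)(x)`. -/
def CSext (n : ℕ) (s : ℝ) (u : En n → ℝ) (x : En n) (z : ℝ) : ℝ :=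
  Pconv n s z u x

/-- The constant `C(n,s) = 4^s Γ(n/2+s) / (π^{n/2} |Γ(-s)|)`. -/
def Cns (n : ℕ) (s : ℝ) : ℝ :=
  4 ^ s * Real.Gamma ((n : ℝ) / 2 + s) / (Real.pi ^ ((n : ℝ) / 2) * |Real.Gamma (-s)|)

/-- The fractional Laplacian `(-Δ)^s w(x)` as a principal-value singular integral. -/
def fracLap (n : ℕ) (s : ℝ) (w : En n → ℝ) (x : En n) : ℝ :=
  Cns n s * limUnder (𝓝[>] (0 : ℝ))
    (fun ε : ℝ => ∫ y in {y : En n | ε < ‖x - y‖}, (w x - w y) / ‖x - y‖ ^ ((n : ℝ) + 2 * s))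

/-- `Λ^s w := -(-Δ)^s w`. -/
def Lam (n : ℕ) (s : ℝ) (w : En n → ℝ) (x : En n) : ℝ := - fracLap n s w x

/-- The first-order carré du champ `Γ₁(u,v) = ½(Λ^s(uv) - u Λ^s v - v Λ^s u)`. -/
def Gamma1 (n : ℕ) (s : ℝ) (u v : En n → ℝ) (x : En n) : ℝ :=
  (Lam n s (fun y => u y * v y) x - u x * Lam n s v x - v x * Lam n s u x) / 2

/-- The constant `β_s = 2^{2s-1} Γ(s)/Γ(1-s)`. -/
def betaS (s : ℝ) : ℝ := 2 ^ (2 * s - 1) * Real.Gamma s / Real.Gamma (1 - s)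

/-- Partial derivative in the `i`-th coordinate direction. -/
def pd {n : ℕ} (i : Fin n) (f : En n → ℝ) (x : En n) : ℝ :=
  fderiv ℝ f x (EuclideanSpace.single i 1)

/-- The Laplacian in the `x`-variables. -/
def lapX {n : ℕ} (f : En n → ℝ) (x : En n) : ℝ := ∑ i, pd i (pd i f) x

/-- The degenerate operator `L_s W = div_{x,z}(z^{1-2s} ∇̃W)`, written out as
`z^{1-2s} Δ_x W + ∂_z(z^{1-2s} ∂_z W)`. -/
def LsOp {n : ℕ} (s : ℝ) (W : En n → ℝ → ℝ) (x : En n) (z : ℝ) : ℝ :=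
  z ^ (1 - 2 * s) * lapX (fun y => W y z) x
    + deriv (fun t => t ^ (1 - 2 * s) * deriv (W x) t) z

/-- The kernel `(|w|²+z²)^{-β}`. -/
def kc (n : ℕ) (β z : ℝ) (w : En n) : ℝ := (‖w‖ ^ 2 + z ^ 2) ^ (-β)

lemma rho_pos {n : ℕ} {z : ℝ} (hz : 0 < z) (w : En n) : 0 < ‖w‖ ^ 2 + z ^ 2 := by positivity

lemma kc_pos {n : ℕ} (β : ℝ) {z : ℝ} (hz : 0 < z) (w : En n) : 0 < kc n β z w :=
  Real.rpow_pos_of_pos (rho_pos hz w) _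

lemma kc_cont {n : ℕ} (β : ℝ) {z : ℝ} (hz : 0 < z) : Continuous (kc n β z) := by
  unfold kc
  refine Continuous.rpow_const (by fun_prop) fun w => Or.inl (rho_pos hz w).ne'

lemma kc_succ {n : ℕ} (β : ℝ) {z : ℝ} (hz : 0 < z) (w : En n) :
    kc n (β + 1) z w * (‖w‖ ^ 2 + z ^ 2) = kc n β z w := by
  unfold kc
  rw [← Real.rpow_add_one (rho_pos hz w).ne']
  congr 1; ring

lemma kc_succ_le {n : ℕ} (β : ℝ) {z : ℝ} (hz : 0 < z) (w : En n) :
    z ^ 2 * kc n (β + 1) z w ≤ kc n β z w := by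
  rw [← kc_succ β hz w]
  nlinarith [kc_pos (β + 1) hz w, sq_nonneg ‖w‖, mul_nonneg (kc_pos (β + 1) hz w).le (sq_nonneg ‖w‖)]

lemma kc_succ_le' {n : ℕ} (β : ℝ) {z : ℝ} (hz : 0 < z) (w : En n) :
    ‖w‖ ^ 2 * kc n (β + 1) z w ≤ kc n β z w := by
  rw [← kc_succ β hz w]
  nlinarith [kc_pos (β + 1) hz w, sq_nonneg z, mul_nonneg (kc_pos (β + 1) hz w).le (sq_nonneg z)]

lemma kc_mono {n : ℕ} {β : ℝ} (hβ : 0 ≤ β) {z z1 : ℝ} (h1 : 0 < z1) (h : z1 ≤ z) (w : En n) :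
    kc n β z w ≤ kc n β z1 w := by
  unfold kc
  refine Real.rpow_le_rpow_of_nonpos (rho_pos h1 w) (by gcongr) (by linarith)

lemma kc_scale {n : ℕ} (β : ℝ) {z : ℝ} (hz : 0 < z) (w : En n) :
    kc n β z (z • w) = z ^ (-(2 * β)) * kc n β 1 w := by
  unfold kc
  have : ‖z • w‖ ^ 2 + z ^ 2 = z ^ 2 * (‖w‖ ^ 2 + 1 ^ 2) := by
    rw [norm_smul, Real.norm_eq_abs, abs_of_pos hz]; ring
  rw [this, Real.mul_rpow (by positivity) (by positivity), ← Real.rpow_natCast z 2, ← Real.rpow_mul hz.le]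
  congr 2; push_cast; ring

lemma kc_integrable {n : ℕ} {β : ℝ} (hβ : (n : ℝ) / 2 < β) {z : ℝ} (hz : 0 < z) :
    Integrable (kc n β z) := by
  have h1 : Integrable (kc n β 1) := by
    have := integrable_rpow_neg_one_add_norm_sq (E := En n) (μ := volume) (r := 2 * β)
      (by simp; linarith)
    refine this.congr (Eventually.of_forall fun w => ?_)
    simp only [kc]
    rw [add_comm]; congr 1
    · ring
    · ring
  have h2 : Integrable (fun w => kc n β z (z • w)) := by
    simp_rw [kc_scale β hz]; exact h1.const_mul _
  exact (integrable_comp_smul_iff volume _ hz.ne').1 h2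

lemma hasDerivAt_kc {n : ℕ} (β : ℝ) {z : ℝ} (hz : 0 < z) (w : En n) :
    HasDerivAt (fun z => kc n β z w) (-(2 * β * z) * kc n (β + 1) z w) z := by
  have h0 : HasDerivAt (fun z : ℝ => ‖w‖ ^ 2 + z ^ 2) (2 * z) z := by
    simpa using (hasDerivAt_pow 2 z).const_add (‖w‖ ^ 2)
  have := h0.rpow_const (p := -β) (Or.inl (rho_pos hz w).ne')
  unfold kc
  convert this using 1
  rw [show -(β + 1) = -β - 1 by ring]; ring

lemma kc_conv_int {n : ℕ} {β : ℝ} (hβ : (n : ℝ) / 2 < β) {z : ℝ} (hz : 0 < z) {g : En n → ℝ}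
    (hg : Continuous g) {M : ℝ} (hM : ∀ a, |g a| ≤ M) (y : En n) :
    Integrable (fun a => kc n β z (y - a) * g a) :=
  ((kc_integrable hβ hz).comp_sub_left y).mul_bdd hg.aestronglyMeasurable
    (Eventually.of_forall hM)

/-- Convolution with `kc`. -/
def Hc (n : ℕ) (β : ℝ) (g : En n → ℝ) (y : En n) (z : ℝ) : ℝ := ∫ a, kc n β z (y - a) * g a

lemma hasDerivAt_Hc {n : ℕ} {β : ℝ} (hβ : (n : ℝ) / 2 < β) {z : ℝ} (hz : 0 < z) {g : En n → ℝ}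
    (hg : Continuous g) {M : ℝ} (hM : ∀ a, |g a| ≤ M) (y : En n) :
    HasDerivAt (Hc n β g y) (-(2 * β * z) * Hc n (β + 1) g y z) z := by
  have hβ0 : 0 < β := lt_of_le_of_lt (by positivity) hβ
  have key := hasDerivAt_integral_of_dominated_loc_of_deriv_le (μ := (volume : Measure (En n)))
    (F := fun z a => kc n β z (y - a) * g a)
    (F' := fun z a => -(2 * β * z) * kc n (β + 1) z (y - a) * g a)
    (bound := fun a => 2 * β * (2 * z) * kc n (β + 1) (z / 2) (y - a) * M)
    (x₀ := z) (s := Ioo (z / 2) (2 * z)) (Ioo_mem_nhds (by linarith) (by linarith))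
    (by
      filter_upwards [lt_mem_nhds hz] with t ht
      exact (kc_conv_int hβ ht hg hM y).aestronglyMeasurable)
    (kc_conv_int hβ hz hg hM y)
    (by
      have : (fun a => -(2 * β * z) * kc n (β + 1) z (y - a) * g a)
        = fun a => -(2 * β * z) * (kc n (β + 1) z (y - a) * g a) := by ext a; ring
      rw [this]
      exact ((kc_conv_int (by linarith) hz hg hM y).const_mul _).aestronglyMeasurable)
    (by
      refine Eventually.of_forall fun a t ht => ?_
      have h1 := kc_mono (β := β + 1) (by linarith) (half_pos hz) ht.1.le (y - a)
      have ht0 : 0 < t := lt_trans (half_pos hz) ht.1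
      have h2 := kc_pos (β + 1) ht0 (y - a)
      rw [norm_mul, norm_mul, norm_neg, Real.norm_eq_abs, Real.norm_eq_abs, Real.norm_eq_abs,
        abs_of_pos h2, abs_of_pos (by positivity)]
      have := ht.2
      have := hM a
      have := kc_pos (β + 1) (half_pos hz) (y - a)
      gcongr)
    ((((kc_integrable (by linarith) (half_pos hz)).comp_sub_left y).const_mul _).mul_const _)
    (by
      refine Eventually.of_forall fun a t ht => ?_
      exact (hasDerivAt_kc β (lt_trans (half_pos hz) ht.1) (y - a)).mul_const _)
  have h2 := key.2
  have e : (∫ a, -(2 * β * z) * kc n (β + 1) z (y - a) * g a) = -(2 * β * z) * Hc n (β + 1) g y z := by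
    unfold Hc; rw [← integral_const_mul]; congr 1; ext a; ring
  rw [e] at h2
  exact h2

lemma Hc_bound {n : ℕ} {β : ℝ} {z : ℝ} {z1 : ℝ} (hβ : (n : ℝ) / 2 < β) (h1 : 0 < z1) (hz : z1 ≤ z)
    {g : En n → ℝ} {M : ℝ} (hM : ∀ a, |g a| ≤ M) (y : En n) :
    |Hc n β g y z| ≤ M * ∫ a, kc n β z1 a := by
  unfold Hc
  have hz0 : 0 < z := lt_of_lt_of_le h1 hz
  have hβ0 : 0 < β := lt_of_le_of_lt (by positivity) hβ
  rw [← integral_sub_left_eq_self (kc n β z1) volume y, ← integral_const_mul, ← Real.norm_eq_abs]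
  refine norm_integral_le_of_norm_le (((kc_integrable hβ h1).comp_sub_left y).const_mul M)
    (Eventually.of_forall fun a => ?_)
  have h2 := kc_pos β hz0 (y - a)
  rw [norm_mul, Real.norm_eq_abs, Real.norm_eq_abs, abs_of_pos h2, mul_comm]
  have := kc_mono hβ0.le h1 hz (y - a)
  have := hM a
  have := (abs_nonneg (g a)).trans this
  gcongr
lemma integral_kc_one {n : ℕ} {s : ℝ} (hs : 0 < s) :
    ∫ w, kc n ((n : ℝ) / 2 + s) 1 w = Real.pi ^ ((n : ℝ) / 2) * Real.Gamma s / Real.Gamma ((n : ℝ) / 2 + s) := by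
  set b := (n : ℝ) / 2 + s with hb
  have hb0 : 0 < b := by positivity
  have hG : 0 < Real.Gamma b := Real.Gamma_pos_of_pos hb0
  have inner : ∀ w : En n, ∫ t in Ioi (0 : ℝ), t ^ (b - 1) * Real.exp (-((‖w‖ ^ 2 + 1 ^ 2) * t))
      = kc n b 1 w * Real.Gamma b := by
    intro w
    rw [Real.integral_rpow_mul_exp_neg_mul_Ioi hb0 (by positivity)]
    unfold kc
    rw [one_div, Real.inv_rpow (by positivity), Real.rpow_neg (by positivity)]
  have hint : Integrable (Function.uncurry fun (w : En n) (t : ℝ) =>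
      t ^ (b - 1) * Real.exp (-((‖w‖ ^ 2 + 1 ^ 2) * t))) (volume.prod (volume.restrict (Ioi 0))) := by
    have hm : Measurable (Function.uncurry fun (w : En n) (t : ℝ) =>
      t ^ (b - 1) * Real.exp (-((‖w‖ ^ 2 + 1 ^ 2) * t))) := by
      unfold Function.uncurry
      fun_prop
    rw [integrable_prod_iff hm.aestronglyMeasurable]
    constructor
    · refine Eventually.of_forall fun w => ?_
      have hi : (∫ t in Ioi (0 : ℝ), t ^ (b - 1) * Real.exp (-((‖w‖ ^ 2 + 1 ^ 2) * t))) ≠ 0 := by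
        rw [inner]; exact (mul_pos (kc_pos b one_pos w) hG).ne'
      exact Integrable.of_integral_ne_zero hi
    · have : (fun w : En n => ∫ t in Ioi (0 : ℝ), ‖Function.uncurry (fun (w : En n) (t : ℝ) =>
          t ^ (b - 1) * Real.exp (-((‖w‖ ^ 2 + 1 ^ 2) * t))) (w, t)‖) = fun w => kc n b 1 w * Real.Gamma b := by
        ext w
        rw [← inner w]
        refine setIntegral_congr_fun measurableSet_Ioi fun t ht => ?_
        have ht : (0 : ℝ) < t := ht
        simp only [Function.uncurry]
        rw [Real.norm_eq_abs, abs_of_nonneg (by positivity)]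
      rw [this]
      exact (kc_integrable (by linarith) one_pos).mul_const _
  have sw := integral_integral_swap hint
  simp_rw [inner] at sw
  rw [integral_mul_const] at sw
  have rhs : ∫ t in Ioi (0 : ℝ), ∫ w : En n, t ^ (b - 1) * Real.exp (-((‖w‖ ^ 2 + 1 ^ 2) * t))
      = Real.pi ^ ((n : ℝ) / 2) * Real.Gamma s := by
    rw [Real.Gamma_eq_integral hs, ← integral_const_mul]
    refine setIntegral_congr_fun measurableSet_Ioi fun t ht => ?_
    have ht : (0 : ℝ) < t := ht
    have e : ∀ w : En n, t ^ (b - 1) * Real.exp (-((‖w‖ ^ 2 + 1 ^ 2) * t))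
      = t ^ (b - 1) * Real.exp (-t) * Real.exp (-t * ‖w‖ ^ 2) := by
      intro w
      rw [mul_assoc, ← Real.exp_add]; congr 2; ring
    simp_rw [e]
    rw [integral_const_mul, GaussianFourier.integral_rexp_neg_mul_sq_norm ht]
    simp only [finrank_euclideanSpace, Fintype.card_fin]
    rw [Real.div_rpow Real.pi_pos.le ht.le]
    have : t ^ (b - 1) = t ^ (s - 1) * t ^ ((n : ℝ) / 2) := by
      rw [← Real.rpow_add ht]; congr 1; rw [hb]; ring
    rw [this]
    have := Real.rpow_pos_of_pos ht ((n : ℝ) / 2)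
    field_simp
  rw [rhs] at sw
  rw [← sw]; field_simp

lemma pns_pos {n : ℕ} {s : ℝ} (hs : 0 < s) : 0 < pns n s := by
  unfold pns
  have := Real.Gamma_pos_of_pos hs
  have : 0 < Real.Gamma ((n : ℝ) / 2 + s) := Real.Gamma_pos_of_pos (by positivity)
  have := Real.pi_pos
  positivity

/-- the exponent `b` -/
def bb (n : ℕ) (s : ℝ) : ℝ := (n : ℝ) / 2 + s

lemma bb_gt {n : ℕ} {s : ℝ} (hs : 0 < s) : (n : ℝ) / 2 < bb n s := by unfold bb; linarith

lemma bb_pos {n : ℕ} {s : ℝ} (hs : 0 < s) : 0 < bb n s := by unfold bb; positivity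

lemma Pker_eq (n : ℕ) (s z : ℝ) (w : En n) :
    Pker n s z w = pns n s * z ^ (2 * s) * kc n (bb n s) z w := by
  unfold Pker kc bb; congr 2; ring

/-- scaling for moments -/
lemma kc_moment_scale {n : ℕ} {s α z : ℝ} (hz : 0 < z) :
    ∫ w, kc n (bb n s) z w * ‖w‖ ^ α = z ^ (α - 2 * s) * ∫ w, kc n (bb n s) 1 w * ‖w‖ ^ α := by
  have h := Measure.integral_comp_smul (volume : Measure (En n))
    (fun w => kc n (bb n s) z w * ‖w‖ ^ α) z
  have e : ∀ w : En n, kc n (bb n s) z (z • w) * ‖z • w‖ ^ α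
      = z ^ (-(2 * bb n s) + α) * (kc n (bb n s) 1 w * ‖w‖ ^ α) := by
    intro w
    rw [kc_scale _ hz, norm_smul, Real.norm_eq_abs, abs_of_pos hz, Real.mul_rpow hz.le (norm_nonneg _),
      Real.rpow_add hz]; ring
  simp_rw [e] at h
  rw [integral_const_mul] at h
  simp only [finrank_euclideanSpace, Fintype.card_fin, smul_eq_mul] at h
  rw [abs_of_pos (by positivity)] at h
  have h2 : (z ^ n) * (z ^ (-(2 * bb n s) + α) * ∫ w : En n, kc n (bb n s) 1 w * ‖w‖ ^ α)
      = ∫ w, kc n (bb n s) z w * ‖w‖ ^ α := by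
    rw [h]; field_simp
  rw [← h2, ← mul_assoc, ← Real.rpow_natCast z n, ← Real.rpow_add hz]
  congr 2; unfold bb; ring

lemma kc_moment_integrable {n : ℕ} {s α z : ℝ} (hα0 : 0 ≤ α) (hα : α < 2 * s) (hz : 0 < z) :
    Integrable (fun w => kc n (bb n s) z w * ‖w‖ ^ α) := by
  have hi : Integrable (kc n (bb n s - α / 2) z) := kc_integrable (by unfold bb; linarith) hz
  refine hi.mono' ?_ (Eventually.of_forall fun w => ?_)
  · exact ((kc_cont _ hz).mul (continuous_norm.rpow_const fun _ => Or.inr hα0)).aestronglyMeasurable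
  · rw [Real.norm_eq_abs, abs_of_nonneg (mul_nonneg (kc_pos _ hz w).le (by positivity))]
    unfold kc
    rw [show -(bb n s - α / 2) = -bb n s + α / 2 by ring, Real.rpow_add (rho_pos hz w)]
    have := rho_pos hz w
    gcongr
    have : ‖w‖ ^ α = (‖w‖ ^ 2) ^ (α / 2) := by
      rw [← Real.rpow_natCast, ← Real.rpow_mul (norm_nonneg _)]; congr 1; push_cast; ring
    rw [this]
    exact Real.rpow_le_rpow (by positivity) (by nlinarith [sq_nonneg z]) (by linarith)

lemma integral_Pker {n : ℕ} {s z : ℝ} (hs : 0 < s) (hz : 0 < z) :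
    pns n s * z ^ (2 * s) * ∫ w, kc n (bb n s) z w = 1 := by
  have h := kc_moment_scale (n := n) (s := s) (α := 0) hz
  simp only [Real.rpow_zero, mul_one, zero_sub] at h
  rw [h]
  have h1 := integral_kc_one (n := n) hs
  unfold bb
  rw [h1]
  have e : z ^ (2 * s) * z ^ (-(2 * s)) = 1 := by rw [← Real.rpow_add hz]; simp
  have := Real.Gamma_pos_of_pos hs
  have : 0 < Real.Gamma ((n : ℝ) / 2 + s) := Real.Gamma_pos_of_pos (by positivity)
  have := Real.rpow_pos_of_pos Real.pi_pos ((n : ℝ) / 2)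
  calc _ = (z ^ (2 * s) * z ^ (-(2 * s))) * (pns n s * (Real.pi ^ ((n : ℝ) / 2) * Real.Gamma s / Real.Gamma ((n : ℝ) / 2 + s))) := by ring
    _ = 1 := by rw [e]; unfold pns; field_simp
lemma pd_contDiff {n : ℕ} (i : Fin n) {v : En n → ℝ} (hv : ContDiff ℝ (⊤ : ℕ∞) v) :
    ContDiff ℝ (⊤ : ℕ∞) (pd i v) := by
  unfold pd
  exact (hv.fderiv_right (m := (⊤ : ℕ∞)) (by simp)).clm_apply contDiff_const

lemma pd_compact {n : ℕ} (i : Fin n) {v : En n → ℝ} (hv : HasCompactSupport v) :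
    HasCompactSupport (pd i v) := by
  unfold pd
  exact hv.fderiv_apply (𝕜 := ℝ) _

lemma conv_eq {n : ℕ} (k v : En n → ℝ) :
    (fun y => ∫ a, k (y - a) * v a) = convolution k v (ContinuousLinearMap.mul ℝ ℝ) volume := by
  ext y
  unfold convolution
  rw [← integral_sub_left_eq_self _ volume y]
  simp

lemma conv_contDiff {n : ℕ} {k v : En n → ℝ} (hk : Continuous k) (hv : ContDiff ℝ (⊤ : ℕ∞) v)
    (hc : HasCompactSupport v) : ContDiff ℝ (⊤ : ℕ∞) (fun y => ∫ a, k (y - a) * v a) := by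
  rw [conv_eq]
  exact hc.contDiff_convolution_right _ hk.locallyIntegrable hv

lemma conv_pd {n : ℕ} {k v : En n → ℝ} (hk : Continuous k) (hv : ContDiff ℝ (⊤ : ℕ∞) v)
    (hc : HasCompactSupport v) (i : Fin n) :
    pd i (fun y => ∫ a, k (y - a) * v a) = fun y => ∫ a, k (y - a) * pd i v a := by
  rw [conv_eq, conv_eq]
  ext y
  have h := hc.hasFDerivAt_convolution_right (ContinuousLinearMap.mul ℝ ℝ) hk.locallyIntegrable
    (hv.of_le (by simp)) (μ := volume) y
  unfold pd
  rw [h.fderiv]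
  have hce : ConvolutionExistsAt k (fderiv ℝ v) y
      (ContinuousLinearMap.precompR (En n) (ContinuousLinearMap.mul ℝ ℝ)) volume :=
    (HasCompactSupport.convolutionExists_right _ (hc.fderiv (𝕜 := ℝ)) hk.locallyIntegrable
      (hv.continuous_fderiv (by simp))) y
  unfold convolution
  rw [ContinuousLinearMap.integral_apply hce]
  rfl

lemma bdd_of_compact {n : ℕ} {v : En n → ℝ} (hv : Continuous v) (hc : HasCompactSupport v) :
    ∃ M : ℝ, 0 < M ∧ ∀ a, |v a| ≤ M := by
  obtain ⟨C, hC⟩ := hc.exists_bound_of_continuous hv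
  exact ⟨max C 1, by positivity, fun a => (hC a).trans (le_max_left _ _)⟩

lemma kc_hasFDerivAt {n : ℕ} (β : ℝ) {z : ℝ} (hz : 0 < z) (x y : En n) :
    HasFDerivAt (fun y => kc n β z (x - y)) ((2 * β * kc n (β + 1) z (x - y)) • innerSL ℝ (x - y)) y := by
  have h0 : HasFDerivAt (fun y : En n => x - y) (-(ContinuousLinearMap.id ℝ (En n))) y :=
    (hasFDerivAt_id y).const_sub x
  have h1 := (h0.norm_sq).add_const (z ^ 2)
  have h2 := h1.rpow_const (p := -β) (Or.inl (rho_pos hz (x - y)).ne')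
  unfold kc
  refine h2.congr_fderiv ?_
  rw [ContinuousLinearMap.comp_neg, ContinuousLinearMap.comp_id, show -(β + 1) = -β - 1 by ring]
  module

lemma kc_pd {n : ℕ} (β : ℝ) {z : ℝ} (hz : 0 < z) (x : En n) (i : Fin n) (y : En n) :
    fderiv ℝ (fun y => kc n β z (x - y)) y (EuclideanSpace.single i 1)
      = 2 * β * kc n (β + 1) z (x - y) * (x - y) i := by
  rw [(kc_hasFDerivAt β hz x y).fderiv]
  simp [EuclideanSpace.inner_single_right]

lemma coord_le {n : ℕ} (w : En n) (i : Fin n) : |w i| ≤ ‖w‖ := by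
  simpa using PiLp.norm_apply_le w i

lemma kcx_hasFDerivAt {n : ℕ} (β : ℝ) {z : ℝ} (hz : 0 < z) (x : En n) (i : Fin n) (y : En n) :
    HasFDerivAt (fun y : En n => kc n β z (x - y) * (x - y) i)
      (kc n β z (x - y) • (-(EuclideanSpace.proj i : En n →L[ℝ] ℝ)) +
        (x - y) i • ((2 * β * kc n (β + 1) z (x - y)) • innerSL ℝ (x - y))) y := by
  have h0 : HasFDerivAt (fun y : En n => (x - y) i) (-(EuclideanSpace.proj i : En n →L[ℝ] ℝ)) y := by
    simpa using ((EuclideanSpace.proj i : En n →L[ℝ] ℝ).hasFDerivAt (x := y)).const_sub (x i)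
  exact (kc_hasFDerivAt β hz x y).mul h0

lemma kcx_pd {n : ℕ} (β : ℝ) {z : ℝ} (hz : 0 < z) (x : En n) (i : Fin n) (y : En n) :
    fderiv ℝ (fun y : En n => kc n β z (x - y) * (x - y) i) y (EuclideanSpace.single i 1)
      = -kc n β z (x - y) + 2 * β * kc n (β + 1) z (x - y) * (x - y) i ^ 2 := by
  rw [(kcx_hasFDerivAt β hz x i y).fderiv]
  simp [EuclideanSpace.inner_single_right]; ring

/-- domination of `w_i kc(β+1)` -/
lemma kcx_le {n : ℕ} (β : ℝ) {z : ℝ} (hz : 0 < z) (w : En n) (i : Fin n) :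
    |kc n (β + 1) z w * w i| ≤ kc n (β + 1) z w + kc n β z w := by
  have h1 := kc_succ_le' β hz w
  have h2 := kc_pos (β + 1) hz w
  rw [abs_mul, abs_of_pos h2]
  have h3 := coord_le w i
  have h4 : |w i| ≤ 1 + ‖w‖ ^ 2 := by nlinarith [norm_nonneg w]
  nlinarith

lemma kcxx_le {n : ℕ} (β : ℝ) {z : ℝ} (hz : 0 < z) (w : En n) (i : Fin n) :
    |kc n (β + 1) z w * w i ^ 2| ≤ kc n β z w := by
  have h1 := kc_succ_le' β hz w
  have h2 := kc_pos (β + 1) hz w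
  rw [abs_mul, abs_of_pos h2, abs_of_nonneg (sq_nonneg _)]
  have h3 : w i ^ 2 ≤ ‖w‖ ^ 2 := sq_le_sq.2 (by simpa using coord_le w i)
  nlinarith

lemma coord_cont {n : ℕ} (i : Fin n) : Continuous fun w : En n => w i :=
  (EuclideanSpace.proj i : En n →L[ℝ] ℝ).continuous

lemma kcx_integrable {n : ℕ} {β : ℝ} (hβ : (n : ℝ) / 2 < β) {z : ℝ} (hz : 0 < z) (i : Fin n) :
    Integrable (fun w : En n => kc n (β + 1) z w * w i) := by
  refine ((kc_integrable (β := β + 1) (by linarith) hz).add (kc_integrable hβ hz)).mono'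
    ((kc_cont _ hz).mul (coord_cont i)).aestronglyMeasurable
    (Eventually.of_forall fun w => kcx_le β hz w i)

lemma kcxx_integrable {n : ℕ} {β : ℝ} (hβ : (n : ℝ) / 2 < β) {z : ℝ} (hz : 0 < z) (i : Fin n) :
    Integrable (fun w : En n => kc n (β + 1) z w * w i ^ 2) := by
  refine (kc_integrable hβ hz).mono'
    ((kc_cont _ hz).mul ((coord_cont i).pow 2)).aestronglyMeasurable
    (Eventually.of_forall fun w => kcxx_le β hz w i)

lemma int_conv_bdd {n : ℕ} {k g : En n → ℝ} (hk : Integrable k) (hg : Continuous g) {M : ℝ}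
    (hM : ∀ a, |g a| ≤ M) (y : En n) : Integrable (fun a => k (y - a) * g a) :=
  (hk.comp_sub_left y).mul_bdd hg.aestronglyMeasurable (Eventually.of_forall hM)

lemma ibp2 {n : ℕ} {β : ℝ} (hβ : (n : ℝ) / 2 < β) {z : ℝ} (hz : 0 < z) (x : En n) (i : Fin n)
    {f : En n → ℝ} (hf : ContDiff ℝ (⊤ : ℕ∞) f) {M : ℝ} (h0 : ∀ a, |f a| ≤ M)
    (h1 : ∀ a, |pd i f a| ≤ M) (h2 : ∀ a, |pd i (pd i f) a| ≤ M) :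
    ∫ y, kc n β z (x - y) * pd i (pd i f) y
      = ∫ y, (-(2 * β) * kc n (β + 1) z (x - y)
          + 4 * β * (β + 1) * (kc n (β + 2) z (x - y) * (x - y) i ^ 2)) * f y := by
  have c1 := pd_contDiff i hf
  have c2 := pd_contDiff i c1
  have hβ1 : (n : ℝ) / 2 < β + 1 := by linarith
  have s1 : ∫ y, kc n β z (x - y) * pd i (pd i f) y
      = - ∫ y, 2 * β * (kc n (β + 1) z (x - y) * (x - y) i) * pd i f y := by
    have e := integral_mul_fderiv_eq_neg_fderiv_mul_of_integrable (μ := (volume : Measure (En n)))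
      (f := fun y => kc n β z (x - y)) (g := pd i f) (v := EuclideanSpace.single i 1)
      (by
        simp_rw [kc_pd β hz x i]
        have := (int_conv_bdd (kcx_integrable hβ hz i) c1.continuous h1 x).const_mul (2 * β)
        refine this.congr (Eventually.of_forall fun y => ?_)
        simp only; ring)
      (int_conv_bdd (kc_integrable hβ hz) c2.continuous h2 x)
      (int_conv_bdd (kc_integrable hβ hz) c1.continuous h1 x)
      (fun y _ => (kc_hasFDerivAt β hz x y).differentiableAt)
      (fun y _ => (c1.differentiable (by simp)) y)
    simp_rw [kc_pd β hz x i] at e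
    refine e.trans ?_
    congr 2; ext y; ring
  have s2 : ∫ y, (kc n (β + 1) z (x - y) * (x - y) i) * pd i f y
      = - ∫ y, (-kc n (β + 1) z (x - y) + 2 * (β + 1) * kc n (β + 1 + 1) z (x - y) * (x - y) i ^ 2) * f y := by
    have e := integral_mul_fderiv_eq_neg_fderiv_mul_of_integrable (μ := (volume : Measure (En n)))
      (f := fun y : En n => kc n (β + 1) z (x - y) * (x - y) i) (g := f) (v := EuclideanSpace.single i 1)
      (by
        simp_rw [kcx_pd (β + 1) hz x i]
        have := ((int_conv_bdd (kcxx_integrable hβ1 hz i) hf.continuous h0 x).const_mul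
          (2 * (β + 1))).sub (int_conv_bdd (kc_integrable hβ1 hz) hf.continuous h0 x)
        refine this.congr (Eventually.of_forall fun y => ?_)
        simp only [Pi.sub_apply]; ring)
      (int_conv_bdd (kcx_integrable hβ hz i) c1.continuous h1 x)
      (int_conv_bdd (kcx_integrable hβ hz i) hf.continuous h0 x)
      (fun y _ => (kcx_hasFDerivAt (β + 1) hz x i y).differentiableAt)
      (fun y _ => (hf.differentiable (by simp)) y)
    simp_rw [kcx_pd (β + 1) hz x i] at e
    exact e
  rw [s1]
  simp_rw [mul_assoc (2 * β)]
  rw [integral_const_mul, s2, mul_neg, neg_neg, ← integral_const_mul]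
  congr 1; ext y
  rw [show β + 1 + 1 = β + 2 by ring]; ring

lemma ibp_lap {n : ℕ} {s : ℝ} (hs : 0 < s) {z : ℝ} (hz : 0 < z) (x : En n)
    {f : En n → ℝ} (hf : ContDiff ℝ (⊤ : ℕ∞) f) {M : ℝ} (h0 : ∀ a, |f a| ≤ M)
    (h1 : ∀ i a, |pd i f a| ≤ M) (h2 : ∀ i a, |pd i (pd i f) a| ≤ M) :
    ∫ y, kc n (bb n s) z (x - y) * lapX f y
      = 4 * bb n s * (s + 1) * Hc n (bb n s + 1) f x z
        - 4 * bb n s * (bb n s + 1) * z ^ 2 * Hc n (bb n s + 2) f x z := by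
  have hβ := bb_gt (n := n) hs
  set b := bb n s with hb
  have hb1 : (n : ℝ) / 2 < b + 1 := by linarith
  have hb2 : (n : ℝ) / 2 < b + 2 := by linarith
  unfold lapX
  simp_rw [Finset.mul_sum]
  rw [integral_finsetSum _ fun i _ => int_conv_bdd (kc_integrable hβ hz)
    (pd_contDiff i (pd_contDiff i hf)).continuous (h2 i) x]
  simp_rw [fun i => ibp2 hβ hz x i hf h0 (h1 i) (h2 i)]
  have hi : ∀ i : Fin n, Integrable (fun y => (-(2 * b) * kc n (b + 1) z (x - y)
          + 4 * b * (b + 1) * (kc n (b + 2) z (x - y) * (x - y) i ^ 2)) * f y) := by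
    intro i
    refine int_conv_bdd (k := fun w => -(2 * b) * kc n (b + 1) z w
          + 4 * b * (b + 1) * (kc n (b + 2) z w * w i ^ 2)) ?_ hf.continuous h0 x
    refine ((kc_integrable hb1 hz).const_mul _).add (Integrable.const_mul ?_ _)
    have := kcxx_integrable hb1 hz i
    rwa [show b + 1 + 1 = b + 2 by ring] at this
  rw [← integral_finsetSum _ fun i _ => hi i]
  unfold Hc
  rw [← integral_const_mul, ← integral_const_mul, ← integral_sub
    ((int_conv_bdd (kc_integrable hb1 hz) hf.continuous h0 x).const_mul _)
    ((int_conv_bdd (kc_integrable hb2 hz) hf.continuous h0 x).const_mul _)]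
  congr 1; ext y
  rw [← Finset.sum_mul, Finset.sum_add_distrib, ← Finset.mul_sum, ← Finset.mul_sum, ← Finset.mul_sum, Finset.sum_const]
  have e1 : ∑ i, (x - y) i ^ 2 = ‖x - y‖ ^ 2 := by
    rw [EuclideanSpace.norm_sq_eq]; simp
  have e2 := kc_succ (b + 1) hz (x - y)
  rw [show b + 1 + 1 = b + 2 by ring] at e2
  rw [e1]
  have e3 : kc n (b + 2) z (x - y) * ‖x - y‖ ^ 2 = kc n (b + 1) z (x - y) - z ^ 2 * kc n (b + 2) z (x - y) := by
    rw [← e2]; ring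
  rw [e3]
  have e4 : (n : ℝ) = 2 * (b - s) := by rw [hb]; unfold bb; ring
  simp only [Finset.card_univ, Fintype.card_fin, nsmul_eq_mul]
  rw [e4]
  ring
lemma CSext_eq (n : ℕ) (s : ℝ) (g : En n → ℝ) (y : En n) (z : ℝ) :
    CSext n s g y z = pns n s * z ^ (2 * s) * Hc n (bb n s) g y z := by
  unfold CSext Pconv Hc
  rw [← integral_const_mul]
  simp_rw [Pker_eq]
  congr 1; ext a; ring

/-- `z^{1-2s} ∂_z U` -/
def Nf (n : ℕ) (s : ℝ) (g : En n → ℝ) (y : En n) (z : ℝ) : ℝ :=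
  pns n s * (2 * s * Hc n (bb n s) g y z - 2 * bb n s * z ^ 2 * Hc n (bb n s + 1) g y z)

/-- `∂_z (z^{1-2s} ∂_z U)` -/
def Nf' (n : ℕ) (s : ℝ) (g : En n → ℝ) (y : En n) (z : ℝ) : ℝ :=
  pns n s * (-(4 * bb n s * (s + 1)) * z * Hc n (bb n s + 1) g y z
    + 4 * bb n s * (bb n s + 1) * z ^ 3 * Hc n (bb n s + 2) g y z)

/-- `z^{1-2s} ∂_z P` -/
def Rf (n : ℕ) (s : ℝ) (w : En n) (z : ℝ) : ℝ :=
  pns n s * (2 * s * kc n (bb n s) z w - 2 * bb n s * z ^ 2 * kc n (bb n s + 1) z w)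

/-- `∂_z (z^{1-2s} ∂_z P)` -/
def Rf' (n : ℕ) (s : ℝ) (w : En n) (z : ℝ) : ℝ :=
  pns n s * (-(4 * bb n s * (s + 1)) * z * kc n (bb n s + 1) z w
    + 4 * bb n s * (bb n s + 1) * z ^ 3 * kc n (bb n s + 2) z w)

/-- abstract calculus: the derivative structure -/
lemma deriv_struct {p s b z : ℝ} (hz : 0 < z) {h0 : ℝ → ℝ} {h1 : ℝ}
    (d0 : HasDerivAt h0 (-(2 * b * z) * h1) z) :
    HasDerivAt (fun z => p * z ^ (2 * s) * h0 z)
      (z ^ (2 * s - 1) * (p * (2 * s * h0 z - 2 * b * z ^ 2 * h1))) z := by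
  have e1 : HasDerivAt (fun z : ℝ => z ^ (2 * s)) (2 * s * z ^ (2 * s - 1)) z :=
    Real.hasDerivAt_rpow_const (Or.inl hz.ne')
  refine ((e1.const_mul p).mul d0).congr_deriv ?_
  have : z ^ (2 * s) = z ^ (2 * s - 1) * z := by
    rw [← Real.rpow_add_one hz.ne']; congr 1; ring
  rw [this]; ring

lemma deriv_struct2 {p s b z : ℝ} {h0 h1 : ℝ → ℝ} {h2 : ℝ}
    (d0 : HasDerivAt h0 (-(2 * b * z) * h1 z) z)
    (d1 : HasDerivAt h1 (-(2 * (b + 1) * z) * h2) z) :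
    HasDerivAt (fun z => p * (2 * s * h0 z - 2 * b * z ^ 2 * h1 z))
      (p * (-(4 * b * (s + 1)) * z * h1 z + 4 * b * (b + 1) * z ^ 3 * h2)) z := by
  have e1 : HasDerivAt (fun z : ℝ => 2 * b * z ^ 2) (2 * b * (2 * z)) z := by
    simpa using (hasDerivAt_pow 2 z).const_mul (2 * b)
  refine (((d0.const_mul (2 * s)).sub (e1.mul d1)).const_mul p).congr_deriv ?_
  ring

section
variable {n : ℕ} {s : ℝ}

lemma hasDerivAt_CSext (hs : 0 < s) {z : ℝ} (hz : 0 < z) {g : En n → ℝ}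
    (hg : Continuous g) {M : ℝ} (hM : ∀ a, |g a| ≤ M) (y : En n) :
    HasDerivAt (CSext n s g y) (z ^ (2 * s - 1) * Nf n s g y z) z := by
  have : CSext n s g y = fun z => pns n s * z ^ (2 * s) * Hc n (bb n s) g y z := by
    ext z; exact CSext_eq n s g y z
  rw [this]
  exact deriv_struct hz (hasDerivAt_Hc (bb_gt hs) hz hg hM y)

lemma hasDerivAt_Nf (hs : 0 < s) {z : ℝ} (hz : 0 < z) {g : En n → ℝ}
    (hg : Continuous g) {M : ℝ} (hM : ∀ a, |g a| ≤ M) (y : En n) :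
    HasDerivAt (Nf n s g y) (Nf' n s g y z) z := by
  have hb := bb_gt (n := n) hs
  have d1 := hasDerivAt_Hc (β := bb n s + 1) (by linarith) hz hg hM y
  rw [show bb n s + 1 + 1 = bb n s + 2 by ring] at d1
  exact deriv_struct2 (hasDerivAt_Hc hb hz hg hM y) d1

lemma hasDerivAt_K {z : ℝ} (hz : 0 < z) (w : En n) :
    HasDerivAt (fun z => Pker n s z w) (z ^ (2 * s - 1) * Rf n s w z) z := by
  simp_rw [Pker_eq]
  exact deriv_struct hz (hasDerivAt_kc (bb n s) hz w)

lemma hasDerivAt_Rf {z : ℝ} (hz : 0 < z) (w : En n) :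
    HasDerivAt (Rf n s w) (Rf' n s w z) z := by
  have d1 := hasDerivAt_kc (bb n s + 1) hz w
  rw [show bb n s + 1 + 1 = bb n s + 2 by ring] at d1
  exact deriv_struct2 (hasDerivAt_kc (bb n s) hz w) d1

lemma CSext_fun_eq (v : En n → ℝ) (z : ℝ) :
    (fun y => CSext n s v y z) = fun y => ∫ a, Pker n s z (y - a) * v a := rfl

lemma Pker_cont {z : ℝ} (hz : 0 < z) : Continuous (Pker n s z) := by
  have : Pker n s z = fun w => pns n s * z ^ (2 * s) * kc n (bb n s) z w := by
    ext w; exact Pker_eq n s z w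
  rw [this]; exact continuous_const.mul (kc_cont _ hz)

lemma CSext_contDiff {z : ℝ} (hz : 0 < z) {v : En n → ℝ} (hv : ContDiff ℝ (⊤ : ℕ∞) v)
    (hc : HasCompactSupport v) : ContDiff ℝ (⊤ : ℕ∞) (fun y => CSext n s v y z) :=
  conv_contDiff (Pker_cont hz) hv hc

lemma CSext_pd {z : ℝ} (hz : 0 < z) {v : En n → ℝ} (hv : ContDiff ℝ (⊤ : ℕ∞) v)
    (hc : HasCompactSupport v) (i : Fin n) :
    pd i (fun y => CSext n s v y z) = fun y => CSext n s (pd i v) y z :=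
  conv_pd (Pker_cont hz) hv hc i

lemma Hc_cont {z : ℝ} (hz : 0 < z) {v : En n → ℝ} (hv : ContDiff ℝ (⊤ : ℕ∞) v)
    (hc : HasCompactSupport v) (β : ℝ) : Continuous (fun y => Hc n β v y z) :=
  (conv_contDiff (kc_cont β hz) hv hc).continuous

lemma CSext_le (hs : 0 < s) {z : ℝ} (hz : 0 < z) {g : En n → ℝ} {M : ℝ}
    (hM : ∀ a, |g a| ≤ M) (y : En n) : |CSext n s g y z| ≤ M := by
  rw [CSext_eq]
  have h := Hc_bound (bb_gt hs) hz le_rfl hM y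
  have h1 := integral_Pker (n := n) hs hz
  have hp : 0 < pns n s * z ^ (2 * s) := mul_pos (pns_pos hs) (by positivity)
  rw [abs_mul, abs_of_pos hp]
  calc _ ≤ pns n s * z ^ (2 * s) * (M * ∫ a, kc n (bb n s) z a) := by gcongr
    _ = M * (pns n s * z ^ (2 * s) * ∫ a, kc n (bb n s) z a) := by ring
    _ = M := by rw [h1, mul_one]

lemma Nf'_eq (hs : 0 < s) {z : ℝ} (hz : 0 < z) {v : En n → ℝ} (hv : ContDiff ℝ (⊤ : ℕ∞) v)
    (hc : HasCompactSupport v) (y : En n) :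
    Nf' n s v y z = -(z ^ (1 - 2 * s)) * lapX (fun y => CSext n s v y z) y := by
  have hlap : lapX (fun y => CSext n s v y z) y
      = pns n s * z ^ (2 * s) * ∫ a, kc n (bb n s) z (y - a) * lapX v a := by
    unfold lapX
    simp_rw [Finset.mul_sum]
    have hci : ∀ i, HasCompactSupport (pd i (pd i v)) := fun i => pd_compact i (pd_compact i hc)
    have hdi : ∀ i, ContDiff ℝ (⊤ : ℕ∞) (pd i (pd i v)) := fun i => pd_contDiff i (pd_contDiff i hv)
    rw [integral_finsetSum]
    · rw [Finset.mul_sum]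
      refine Finset.sum_congr rfl fun i _ => ?_
      rw [CSext_pd hz hv hc, CSext_pd hz (pd_contDiff i hv) (pd_compact i hc)]
      exact CSext_eq n s _ y z
    · intro i _
      obtain ⟨M, -, hM⟩ := bdd_of_compact (hdi i).continuous (hci i)
      exact kc_conv_int (bb_gt hs) hz (hdi i).continuous hM y
  obtain ⟨M0, -, hM0⟩ := bdd_of_compact hv.continuous hc
  choose M1 h1p hM1 using fun i => bdd_of_compact (pd_contDiff i hv).continuous (pd_compact i hc)
  choose M2 h2p hM2 using fun i =>
    bdd_of_compact (pd_contDiff i (pd_contDiff i hv)).continuous (pd_compact i (pd_compact i hc))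
  have hle1 : ∀ i, M1 i ≤ |M0| + ∑ i, M1 i + ∑ i, M2 i := fun i => by
    have := Finset.single_le_sum (f := M1) (fun j _ => (h1p j).le) (Finset.mem_univ i)
    have := Finset.sum_nonneg (s := Finset.univ) (f := M2) (fun j _ => (h2p j).le)
    linarith [abs_nonneg M0]
  have hle2 : ∀ i, M2 i ≤ |M0| + ∑ i, M1 i + ∑ i, M2 i := fun i => by
    have := Finset.single_le_sum (f := M2) (fun j _ => (h2p j).le) (Finset.mem_univ i)
    have := Finset.sum_nonneg (s := Finset.univ) (f := M1) (fun j _ => (h1p j).le)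
    linarith [abs_nonneg M0]
  have hle0 : M0 ≤ |M0| + ∑ i, M1 i + ∑ i, M2 i := by
    have := Finset.sum_nonneg (s := Finset.univ) (f := M2) (fun j _ => (h2p j).le)
    have := Finset.sum_nonneg (s := Finset.univ) (f := M1) (fun j _ => (h1p j).le)
    linarith [le_abs_self M0]
  rw [hlap, ibp_lap hs hz y hv (fun a => (hM0 a).trans hle0) (fun i a => (hM1 i a).trans (hle1 i))
    (fun i a => (hM2 i a).trans (hle2 i))]
  unfold Nf'
  have e : z ^ (1 - 2 * s) * z ^ (2 * s) = z := by rw [← Real.rpow_add hz]; simp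
  linear_combination (pns n s * (-(4 * bb n s * (s + 1)) * Hc n (bb n s + 1) v y z
    + 4 * bb n s * (bb n s + 1) * z ^ 2 * Hc n (bb n s + 2) v y z)) * (-e)

end
section
variable {n : ℕ} {s : ℝ}

lemma pd_sq_sub {f : En n → ℝ} (hf : ContDiff ℝ (⊤ : ℕ∞) f) (c : ℝ) (i : Fin n) :
    pd i (fun y => (f y - c) ^ 2) = fun y => 2 * ((f y - c) * pd i f y) := by
  ext y
  have h := ((hf.differentiable (by simp) y).hasFDerivAt.sub_const c).pow 2
  unfold pd
  rw [h.fderiv]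
  simp
  ring

lemma pd_two_mul {f g : En n → ℝ} (hf : ContDiff ℝ (⊤ : ℕ∞) f) (hg : ContDiff ℝ (⊤ : ℕ∞) g)
    (c : ℝ) (i : Fin n) :
    pd i (fun y => 2 * ((f y - c) * g y)) = fun y => 2 * (pd i f y * g y + (f y - c) * pd i g y) := by
  ext y
  have h := (((hf.differentiable (by simp) y).hasFDerivAt.sub_const c).mul
    (hg.differentiable (by simp) y).hasFDerivAt).const_mul 2
  simp only [Pi.mul_apply] at h
  unfold pd
  rw [h.fderiv]
  simp
  ring

lemma lap_sq_sub {f : En n → ℝ} (hf : ContDiff ℝ (⊤ : ℕ∞) f) (c : ℝ) (y : En n) :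
    lapX (fun y => (f y - c) ^ 2) y = 2 * (f y - c) * lapX f y + 2 * ∑ i, pd i f y ^ 2 := by
  unfold lapX
  simp_rw [pd_sq_sub hf c, fun i => pd_two_mul hf (pd_contDiff i hf) c i]
  rw [Finset.mul_sum, Finset.mul_sum, ← Finset.sum_add_distrib]
  refine Finset.sum_congr rfl fun i _ => ?_
  ring

/-- the integrand -/
def Jf (n : ℕ) (s : ℝ) (v : En n → ℝ) (c : ℝ) (x : En n) (z : ℝ) (y : En n) : ℝ :=
  2 * Pker n s z (x - y) * (CSext n s v y z - c) * Nf n s v y z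
    - (CSext n s v y z - c) ^ 2 * Rf n s (x - y) z

def Jf' (n : ℕ) (s : ℝ) (v : En n → ℝ) (c : ℝ) (x : En n) (z : ℝ) (y : En n) : ℝ :=
  2 * Pker n s z (x - y) * (z ^ (2 * s - 1) * Nf n s v y z) * Nf n s v y z
    + 2 * Pker n s z (x - y) * (CSext n s v y z - c) * Nf' n s v y z
    - (CSext n s v y z - c) ^ 2 * Rf' n s (x - y) z

def Bf (n : ℕ) (s : ℝ) (v : En n → ℝ) (c : ℝ) (x : En n) (z : ℝ) : ℝ := ∫ y, Jf n s v c x z y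

lemma hasDerivAt_Jf (hs : 0 < s) {z : ℝ} (hz : 0 < z) {v : En n → ℝ}
    (hv : Continuous v) {M : ℝ} (hM : ∀ a, |v a| ≤ M) (c : ℝ) (x y : En n) :
    HasDerivAt (fun z => Jf n s v c x z y) (Jf' n s v c x z y) z := by
  have dV := (hasDerivAt_CSext hs hz hv hM y).sub_const c
  have dN := hasDerivAt_Nf hs hz hv hM y
  have dK := hasDerivAt_K (s := s) hz (x - y)
  have dR := hasDerivAt_Rf (s := s) hz (x - y)
  unfold Jf
  refine ((((dK.const_mul 2).mul dV).mul dN).sub ((dV.pow 2).mul dR)).congr_deriv ?_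
  unfold Jf'
  simp only [Pi.pow_apply, Pi.mul_apply]
  ring

lemma Pker_nonneg (hs : 0 < s) {z : ℝ} (hz : 0 < z) (w : En n) : 0 ≤ Pker n s z w := by
  rw [Pker_eq]
  have := kc_pos (bb n s) hz w
  have := pns_pos (n := n) hs
  positivity

/-- local uniform bounds -/
lemma loc_bounds (hs : 0 < s) {z0 : ℝ} (hz0 : 0 < z0) {v : En n → ℝ}
    {M : ℝ} (hM : ∀ a, |v a| ≤ M) (c : ℝ) (x : En n) :
    ∃ C : ℝ, 0 ≤ C ∧ ∀ z ∈ Ioo (z0 / 2) (2 * z0), ∀ y,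
      |CSext n s v y z - c| ≤ C ∧ |Nf n s v y z| ≤ C ∧ |z ^ (2 * s - 1) * Nf n s v y z| ≤ C ∧
      |Nf' n s v y z| ≤ C ∧ |Pker n s z (x - y)| ≤ C * kc n (bb n s) (z0 / 2) (x - y) ∧
      |Rf n s (x - y) z| ≤ C * kc n (bb n s) (z0 / 2) (x - y) ∧
      |Rf' n s (x - y) z| ≤ C * kc n (bb n s) (z0 / 2) (x - y) := by
  have hb := bb_gt (n := n) hs
  have hb0 := bb_pos (n := n) hs
  have hp := pns_pos (n := n) hs
  set b := bb n s with hbdef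
  set p := pns n s
  have hM0 : 0 ≤ M := (abs_nonneg _).trans (hM 0)
  have hz1 : 0 < z0 / 2 := half_pos hz0
  -- bounds of the powers
  have hpow : ∀ r : ℝ, ∃ C : ℝ, 0 ≤ C ∧ ∀ z ∈ Ioo (z0 / 2) (2 * z0), z ^ r ≤ C := by
    intro r
    obtain ⟨C, hC⟩ := (isCompact_Icc (a := z0 / 2) (b := 2 * z0)).exists_bound_of_continuousOn
      (f := fun z : ℝ => z ^ r) (fun z hz => (Real.continuousAt_rpow_const z r
        (Or.inl (lt_of_lt_of_le hz1 hz.1).ne')).continuousWithinAt)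
    refine ⟨|C|, abs_nonneg _, fun z hz => ?_⟩
    exact (le_abs_self _).trans ((hC z (Ioo_subset_Icc_self hz)).trans (le_abs_self _))
  obtain ⟨A1, hA1, h1⟩ := hpow (2 * s)
  obtain ⟨A2, hA2, h2⟩ := hpow (2 * s - 1)
  have hI : ∀ β, 0 ≤ ∫ a, kc n β (z0 / 2) a := fun β => integral_nonneg fun a => (kc_pos β hz1 a).le
  set I0 := M * ∫ a, kc n b (z0 / 2) a
  set I1 := M * ∫ a, kc n (b + 1) (z0 / 2) a
  set I2 := M * ∫ a, kc n (b + 2) (z0 / 2) a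
  have hI0 : 0 ≤ I0 := mul_nonneg hM0 (hI _)
  have hI1 : 0 ≤ I1 := mul_nonneg hM0 (hI _)
  have hI2 : 0 ≤ I2 := mul_nonneg hM0 (hI _)
  set q := (z0 / 2) ^ 2 with hq
  have hq0 : 0 < q := by positivity
  set CN := p * (2 * s * I0 + 2 * b * (2 * z0) ^ 2 * I1)
  set CN' := p * (4 * b * (s + 1) * (2 * z0) * I1 + 4 * b * (b + 1) * (2 * z0) ^ 3 * I2)
  set CR := p * (2 * s + 2 * b * (2 * z0) ^ 2 * q⁻¹)
  set CR' := p * (4 * b * (s + 1) * (2 * z0) * q⁻¹ + 4 * b * (b + 1) * (2 * z0) ^ 3 * (q⁻¹ * q⁻¹))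
  have cN : 0 ≤ CN := by positivity
  have cN' : 0 ≤ CN' := by positivity
  have cR : 0 ≤ CR := by positivity
  have cR' : 0 ≤ CR' := by positivity
  have hc := abs_nonneg c
  have pA : 0 ≤ p * A1 := by positivity
  have aN : 0 ≤ A2 * CN := by positivity
  refine ⟨(M + |c|) + CN + A2 * CN + CN' + p * A1 + CR + CR', by positivity, fun z hz y => ?_⟩
  have hz' : 0 < z := lt_trans hz1 hz.1
  have hle := hz.1.le
  have hle2 := hz.2.le
  have H0 := Hc_bound hb hz1 hle hM y
  have H1 := Hc_bound (β := b + 1) (by linarith) hz1 hle hM y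
  have H2 := Hc_bound (β := b + 2) (by linarith) hz1 hle hM y
  set κ := kc n b (z0 / 2) (x - y) with hκ
  have hκ0 : 0 < κ := kc_pos _ hz1 _
  have K0 : |kc n b z (x - y)| ≤ κ := by
    rw [abs_of_pos (kc_pos _ hz' _)]; exact kc_mono hb0.le hz1 hle _
  have k1 : kc n (b + 1) (z0 / 2) (x - y) ≤ q⁻¹ * κ := by
    have := kc_succ_le b hz1 (x - y)
    rw [inv_mul_eq_div, le_div_iff₀ hq0, mul_comm]; exact this
  have k2 : kc n (b + 2) (z0 / 2) (x - y) ≤ q⁻¹ * q⁻¹ * κ := by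
    have := kc_succ_le (b + 1) hz1 (x - y)
    rw [show b + 1 + 1 = b + 2 by ring] at this
    rw [mul_assoc, inv_mul_eq_div, le_div_iff₀ hq0, mul_comm]; exact this.trans k1
  have K1 : |kc n (b + 1) z (x - y)| ≤ q⁻¹ * κ := by
    rw [abs_of_pos (kc_pos _ hz' _)]; exact (kc_mono (by linarith) hz1 hle _).trans k1
  have K2 : |kc n (b + 2) z (x - y)| ≤ q⁻¹ * q⁻¹ * κ := by
    rw [abs_of_pos (kc_pos _ hz' _)]; exact (kc_mono (by linarith) hz1 hle _).trans k2
  have gen0 : ∀ h0 h1 J0 J1 : ℝ, |h0| ≤ J0 → |h1| ≤ J1 →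
      |p * (2 * s * h0 - 2 * b * z ^ 2 * h1)| ≤ p * (2 * s * J0 + 2 * b * (2 * z0) ^ 2 * J1) := by
    intro h0 h1 J0 J1 e0 e1
    rw [abs_mul, abs_of_pos hp]
    gcongr
    refine (abs_sub _ _).trans ?_
    rw [abs_mul, abs_mul (2 * b * z ^ 2), abs_of_pos (show 0 < 2 * s by positivity),
      abs_of_pos (show 0 < 2 * b * z ^ 2 by positivity)]
    gcongr
  have gen1 : ∀ h0 h1 J0 J1 : ℝ, |h0| ≤ J0 → |h1| ≤ J1 →
      |p * (-(4 * b * (s + 1)) * z * h0 + 4 * b * (b + 1) * z ^ 3 * h1)| ≤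
        p * (4 * b * (s + 1) * (2 * z0) * J0 + 4 * b * (b + 1) * (2 * z0) ^ 3 * J1) := by
    intro h0 h1 J0 J1 e0 e1
    rw [abs_mul, abs_of_pos hp]
    gcongr
    refine (abs_add_le _ _).trans ?_
    rw [abs_mul, abs_mul (4 * b * (b + 1) * z ^ 3), abs_of_pos (show 0 < 4 * b * (b + 1) * z ^ 3 by positivity),
      abs_mul, abs_neg, abs_of_pos hz', abs_of_pos (show 0 < 4 * b * (s + 1) by positivity)]
    gcongr
  have bN : |Nf n s v y z| ≤ CN := gen0 _ _ _ _ H0 H1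
  have bN' : |Nf' n s v y z| ≤ CN' := gen1 _ _ _ _ H1 H2
  have bR : |Rf n s (x - y) z| ≤ CR * κ := (gen0 _ _ _ _ K0 K1).trans (le_of_eq (by ring))
  have bR' : |Rf' n s (x - y) z| ≤ CR' * κ := (gen1 _ _ _ _ K1 K2).trans (le_of_eq (by ring))
  refine ⟨?_, ?_, ?_, ?_, ?_, ?_, ?_⟩
  · have := CSext_le hs hz' hM y
    refine (abs_sub _ _).trans ?_
    linarith
  · linarith
  · have : |z ^ (2 * s - 1) * Nf n s v y z| ≤ A2 * CN := by
      rw [abs_mul, abs_of_nonneg (by positivity)]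
      have := h2 z hz
      gcongr
    linarith
  · linarith
  · have : |Pker n s z (x - y)| ≤ p * A1 * κ := by
      rw [Pker_eq, abs_mul, abs_mul, abs_of_pos hp, abs_of_nonneg (by positivity : 0 ≤ z ^ (2 * s))]
      have := h1 z hz
      gcongr
    refine this.trans ?_
    gcongr
    linarith
  · refine bR.trans ?_
    gcongr
    linarith
  · refine bR'.trans ?_
    gcongr
    linarith

lemma Nf_cont {z : ℝ} (hz : 0 < z) {v : En n → ℝ} (hv : ContDiff ℝ (⊤ : ℕ∞) v)
    (hc : HasCompactSupport v) : Continuous fun y => Nf n s v y z := by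
  unfold Nf
  have := Hc_cont hz hv hc (bb n s)
  have := Hc_cont hz hv hc (bb n s + 1)
  fun_prop

lemma Nf'_cont {z : ℝ} (hz : 0 < z) {v : En n → ℝ} (hv : ContDiff ℝ (⊤ : ℕ∞) v)
    (hc : HasCompactSupport v) : Continuous fun y => Nf' n s v y z := by
  unfold Nf'
  have := Hc_cont hz hv hc (bb n s + 2)
  have := Hc_cont hz hv hc (bb n s + 1)
  fun_prop

lemma Rf_cont {z : ℝ} (hz : 0 < z) : Continuous fun w => Rf n s w z := by
  unfold Rf
  have := kc_cont (n := n) (bb n s) hz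
  have := kc_cont (n := n) (bb n s + 1) hz
  fun_prop

lemma Rf'_cont {z : ℝ} (hz : 0 < z) : Continuous fun w => Rf' n s w z := by
  unfold Rf'
  have := kc_cont (n := n) (bb n s + 2) hz
  have := kc_cont (n := n) (bb n s + 1) hz
  fun_prop

lemma Jf_cont {z : ℝ} (hz : 0 < z) {v : En n → ℝ} (hv : ContDiff ℝ (⊤ : ℕ∞) v)
    (hc : HasCompactSupport v) (c : ℝ) (x : En n) : Continuous (Jf n s v c x z) := by
  unfold Jf
  have h1 := Nf_cont (s := s) hz hv hc
  have h2 := (CSext_contDiff (s := s) hz hv hc).continuous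
  have h3 := (Rf_cont (n := n) (s := s) hz).comp (continuous_const.sub continuous_id : Continuous fun y => x - y)
  have h4 := (Pker_cont (n := n) (s := s) hz).comp (continuous_const.sub continuous_id : Continuous fun y => x - y)
  exact (((continuous_const.mul h4).mul (h2.sub continuous_const)).mul h1).sub
    (((h2.sub continuous_const).pow 2).mul h3)

lemma Jf'_cont {z : ℝ} (hz : 0 < z) {v : En n → ℝ} (hv : ContDiff ℝ (⊤ : ℕ∞) v)
    (hc : HasCompactSupport v) (c : ℝ) (x : En n) : Continuous (Jf' n s v c x z) := by
  unfold Jf'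
  have h1 := Nf_cont (s := s) hz hv hc
  have h1' := Nf'_cont (s := s) hz hv hc
  have h2 := (CSext_contDiff (s := s) hz hv hc).continuous
  have h3 := (Rf'_cont (n := n) (s := s) hz).comp (continuous_const.sub continuous_id : Continuous fun y => x - y)
  have h4 := (Pker_cont (n := n) (s := s) hz).comp (continuous_const.sub continuous_id : Continuous fun y => x - y)
  exact ((((continuous_const.mul h4).mul (continuous_const.mul h1)).mul h1).add
    (((continuous_const.mul h4).mul (h2.sub continuous_const)).mul h1')).sub
    (((h2.sub continuous_const).pow 2).mul h3)

lemma hasDerivAt_Bf0 (hs : 0 < s) {z : ℝ} (hz : 0 < z) {v : En n → ℝ}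
    (hv : ContDiff ℝ (⊤ : ℕ∞) v) (hc : HasCompactSupport v) (c : ℝ) (x : En n) :
    Integrable (Jf' n s v c x z) ∧ HasDerivAt (Bf n s v c x) (∫ y, Jf' n s v c x z y) z := by
  obtain ⟨M, -, hM⟩ := bdd_of_compact hv.continuous hc
  obtain ⟨C, hC0, hC⟩ := loc_bounds (n := n) hs hz hM c x
  have hκ := ((kc_integrable (bb_gt (n := n) hs) (half_pos hz)).comp_sub_left x)
  refine hasDerivAt_integral_of_dominated_loc_of_deriv_le (μ := (volume : Measure (En n)))
    (F := fun z y => Jf n s v c x z y)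
    (F' := fun z y => Jf' n s v c x z y)
    (bound := fun y => (5 * C ^ 3) * kc n (bb n s) (z / 2) (x - y))
    (x₀ := z) (s := Ioo (z / 2) (2 * z)) (Ioo_mem_nhds (by linarith) (by linarith)) ?_ ?_ ?_ ?_ ?_ ?_
  · filter_upwards [lt_mem_nhds hz] with t ht
    exact (Jf_cont ht hv hc c x).aestronglyMeasurable
  · refine (hκ.const_mul (3 * C ^ 3)).mono' (Jf_cont hz hv hc c x).aestronglyMeasurable
      (Eventually.of_forall fun y => ?_)
    obtain ⟨h1, h2, h3, h4, h5, h6, h7⟩ := hC z ⟨by linarith, by linarith⟩ y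
    set κ := kc n (bb n s) (z / 2) (x - y)
    have hk : 0 < κ := kc_pos _ (half_pos hz) _
    unfold Jf
    rw [Real.norm_eq_abs]
    refine (abs_sub _ _).trans ?_
    have e1 : |2 * Pker n s z (x - y) * (CSext n s v y z - c) * Nf n s v y z| ≤ 2 * (C * κ) * C * C := by
      rw [abs_mul, abs_mul, abs_mul, abs_two]; gcongr
    have e2 : |(CSext n s v y z - c) ^ 2 * Rf n s (x - y) z| ≤ C ^ 2 * (C * κ) := by
      rw [abs_mul, abs_pow]; gcongr
    exact (add_le_add e1 e2).trans (le_of_eq (by ring))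
  · exact (Jf'_cont hz hv hc c x).aestronglyMeasurable
  · refine Eventually.of_forall fun y t ht => ?_
    obtain ⟨h1, h2, h3, h4, h5, h6, h7⟩ := hC t ht y
    set κ := kc n (bb n s) (z / 2) (x - y)
    have hk : 0 < κ := kc_pos _ (half_pos hz) _
    unfold Jf'
    rw [Real.norm_eq_abs]
    refine (abs_sub _ _).trans ?_
    have e1 : |2 * Pker n s t (x - y) * (CSext n s v y t - c) * Nf' n s v y t| ≤ 2 * (C * κ) * C * C := by
      rw [abs_mul, abs_mul, abs_mul, abs_two]; gcongr
    have e0 : |2 * Pker n s t (x - y) * (t ^ (2 * s - 1) * Nf n s v y t) * Nf n s v y t| ≤ 2 * (C * κ) * C * C := by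
      rw [abs_mul, abs_mul, abs_mul 2, abs_two]; gcongr
    have e2 : |(CSext n s v y t - c) ^ 2 * Rf' n s (x - y) t| ≤ C ^ 2 * (C * κ) := by
      rw [abs_mul, abs_pow]; gcongr
    exact (add_le_add ((abs_add_le _ _).trans (add_le_add e0 e1)) e2).trans (le_of_eq (by ring))
  · exact hκ.const_mul _
  · refine Eventually.of_forall fun y t ht => ?_
    exact hasDerivAt_Jf hs (lt_trans (half_pos hz) ht.1) hv.continuous hM c x y

end
section
variable {n : ℕ} {s : ℝ}

/-- energy density -/
def En2 (n : ℕ) (s : ℝ) (v : En n → ℝ) (z : ℝ) (y : En n) : ℝ :=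
  (∑ i, pd i (fun y' => CSext n s v y' z) y ^ 2) + (deriv (CSext n s v y) z) ^ 2

lemma Pker_integrable (hs : 0 < s) {z : ℝ} (hz : 0 < z) : Integrable (Pker n s z) := by
  have : Pker n s z = fun w => pns n s * z ^ (2 * s) * kc n (bb n s) z w := by
    ext w; exact Pker_eq n s z w
  rw [this]; exact (kc_integrable (bb_gt hs) hz).const_mul _

lemma integral_Jf' (hs : 0 < s) {z : ℝ} (hz : 0 < z) {v : En n → ℝ}
    (hv : ContDiff ℝ (⊤ : ℕ∞) v) (hc : HasCompactSupport v) (c : ℝ) (x : En n) :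
    ∫ y, Jf' n s v c x z y = 2 * (Pconv n s z (En2 n s v z) x * z ^ (1 - 2 * s)) := by
  have hJ := (hasDerivAt_Bf0 hs hz hv hc c x).1
  obtain ⟨M0, hM0p, hM0⟩ := bdd_of_compact hv.continuous hc
  choose M1 h1p hM1 using fun i => bdd_of_compact (pd_contDiff i hv).continuous (pd_compact i hc)
  choose M2 h2p hM2 using fun i =>
    bdd_of_compact (pd_contDiff i (pd_contDiff i hv)).continuous (pd_compact i (pd_compact i hc))
  have s1 := Finset.sum_nonneg (s := Finset.univ) (f := M1) (fun j _ => (h1p j).le)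
  have s2 := Finset.sum_nonneg (s := Finset.univ) (f := M2) (fun j _ => (h2p j).le)
  set M := M0 + ∑ i, M1 i + ∑ i, M2 i + |c| with hMd
  have hcn := abs_nonneg c
  have hMp : 0 < M := by positivity
  have hV : ContDiff ℝ (⊤ : ℕ∞) (fun y => CSext n s v y z) := CSext_contDiff hz hv hc
  have hVb : ∀ y, |CSext n s v y z - c| ≤ M := fun y => by
    have := CSext_le hs hz hM0 y
    refine (abs_sub _ _).trans ?_
    linarith
  have hV1 : ∀ i y, |pd i (fun y => CSext n s v y z) y| ≤ M := fun i y => by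
    rw [CSext_pd hz hv hc]
    have := CSext_le hs hz (hM1 i) y
    have := Finset.single_le_sum (f := M1) (fun j _ => (h1p j).le) (Finset.mem_univ i)
    linarith
  have hV2 : ∀ i y, |pd i (pd i (fun y => CSext n s v y z)) y| ≤ M := fun i y => by
    rw [CSext_pd hz hv hc, CSext_pd hz (pd_contDiff i hv) (pd_compact i hc)]
    have := CSext_le hs hz (hM2 i) y
    have := Finset.single_le_sum (f := M2) (fun j _ => (h2p j).le) (Finset.mem_univ i)
    linarith
  set f : En n → ℝ := fun y => (CSext n s v y z - c) ^ 2 with hf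
  have cf : ContDiff ℝ (⊤ : ℕ∞) f := (hV.sub contDiff_const).pow 2
  have f0 : ∀ y, |f y| ≤ 4 * M ^ 2 := fun y => by
    rw [hf]; simp only [abs_pow]
    have := pow_le_pow_left₀ (abs_nonneg _) (hVb y) 2
    nlinarith
  have f1 : ∀ i y, |pd i f y| ≤ 4 * M ^ 2 := fun i y => by
    rw [hf, pd_sq_sub hV c i]
    simp only [abs_mul, abs_two]
    have := mul_le_mul (hVb y) (hV1 i y) (abs_nonneg _) hMp.le
    nlinarith
  have f2 : ∀ i y, |pd i (pd i f) y| ≤ 4 * M ^ 2 := fun i y => by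
    rw [hf, pd_sq_sub hV c i, pd_two_mul hV (pd_contDiff i hV) c i]
    simp only [abs_mul, abs_two]
    have e1 := mul_le_mul (hVb y) (hV2 i y) (abs_nonneg _) hMp.le
    have e2 := mul_le_mul (hV1 i y) (hV1 i y) (abs_nonneg _) hMp.le
    have := abs_add_le (pd i (fun y => CSext n s v y z) y * pd i (fun y => CSext n s v y z) y)
      ((CSext n s v y z - c) * pd i (pd i (fun y => CSext n s v y z)) y)
    rw [abs_mul, abs_mul] at this
    nlinarith
  have hibp := ibp_lap hs hz x cf f0 f1 f2
  have hb := bb_gt (n := n) hs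
  have i1 : Integrable (fun y => kc n (bb n s + 1) z (x - y) * f y) :=
    kc_conv_int (by linarith) hz cf.continuous f0 x
  have i2 : Integrable (fun y => kc n (bb n s + 2) z (x - y) * f y) :=
    kc_conv_int (by linarith) hz cf.continuous f0 x
  have efun : (fun y => f y * Rf' n s (x - y) z) = fun y =>
      (-(pns n s * (4 * bb n s * (s + 1)) * z)) * (kc n (bb n s + 1) z (x - y) * f y)
        + (pns n s * (4 * bb n s * (bb n s + 1)) * z ^ 3) * (kc n (bb n s + 2) z (x - y) * f y) := by
    ext y; unfold Rf'; ring
  have iR : Integrable (fun y => f y * Rf' n s (x - y) z) := by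
    rw [efun]; exact (i1.const_mul _).add (i2.const_mul _)
  have ez : z ^ (1 - 2 * s) * z ^ (2 * s) = z := by rw [← Real.rpow_add hz]; simp
  have ez2 : z ^ (1 - 2 * s) * z ^ (2 * s - 1) = 1 := by rw [← Real.rpow_add hz]; simp
  have eR : ∫ y, f y * Rf' n s (x - y) z
      = - ∫ y, z ^ (1 - 2 * s) * (Pker n s z (x - y) * lapX f y) := by
    have e2 : ∫ y, z ^ (1 - 2 * s) * (Pker n s z (x - y) * lapX f y)
        = z ^ (1 - 2 * s) * (pns n s * z ^ (2 * s) * ∫ y, kc n (bb n s) z (x - y) * lapX f y) := by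
      rw [← integral_const_mul, ← integral_const_mul]
      congr 1; ext y; rw [Pker_eq]; ring
    rw [e2, hibp, efun, integral_add (i1.const_mul _) (i2.const_mul _), integral_const_mul,
      integral_const_mul]
    unfold Hc
    linear_combination (pns n s * (4 * bb n s * (s + 1) * (∫ y, kc n (bb n s + 1) z (x - y) * f y)
      - 4 * bb n s * (bb n s + 1) * z ^ 2 * ∫ y, kc n (bb n s + 2) z (x - y) * f y)) * ez
  have iL : Integrable (fun y => z ^ (1 - 2 * s) * (Pker n s z (x - y) * lapX f y)) := by
    refine Integrable.const_mul ?_ _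
    refine int_conv_bdd (M := ∑ i : Fin n, 4 * M ^ 2) (Pker_integrable hs hz) ?_ ?_ x
    · unfold lapX
      exact continuous_finsetSum _ fun i _ => (pd_contDiff i (pd_contDiff i cf)).continuous
    · intro y
      unfold lapX
      exact (Finset.abs_sum_le_sum_abs _ _).trans (Finset.sum_le_sum fun i _ => f2 i y)
  have split : ∫ y, Jf' n s v c x z y = (∫ y, (Jf' n s v c x z y + f y * Rf' n s (x - y) z))
      + ∫ y, z ^ (1 - 2 * s) * (Pker n s z (x - y) * lapX f y) := by
    rw [integral_add hJ iR, eR]; ring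
  have hJR : Integrable (fun y => Jf' n s v c x z y + f y * Rf' n s (x - y) z) := hJ.add iR
  rw [split, ← integral_add hJR iL]
  unfold Pconv
  rw [mul_comm _ (z ^ (1 - 2 * s)), ← integral_const_mul, ← integral_const_mul]
  congr 1; ext y
  rw [hf, lap_sq_sub hV c y]
  simp only [Jf', En2]
  rw [(hasDerivAt_CSext hs hz hv.continuous hM0 y).deriv, Nf'_eq hs hz hv hc]
  linear_combination (-2 * Pker n s z (x - y) * z ^ (2 * s - 1) * Nf n s v y z ^ 2) * ez2

lemma hasDerivAt_Bf (hs : 0 < s) {z : ℝ} (hz : 0 < z) {v : En n → ℝ}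
    (hv : ContDiff ℝ (⊤ : ℕ∞) v) (hc : HasCompactSupport v) (c : ℝ) (x : En n) :
    HasDerivAt (Bf n s v c x) (2 * (Pconv n s z (En2 n s v z) x * z ^ (1 - 2 * s))) z := by
  rw [← integral_Jf' hs hz hv hc c x]
  exact (hasDerivAt_Bf0 hs hz hv hc c x).2

end
section
variable {n : ℕ} {s : ℝ}

lemma Hc_const_sub (hs : 0 < s) {z : ℝ} (hz : 0 < z) {v : En n → ℝ} (hv : Continuous v) {M : ℝ}
    (hM : ∀ a, |v a| ≤ M) (y : En n) (c : ℝ) :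
    CSext n s (fun a => v a - c) y z = CSext n s v y z - c := by
  rw [CSext_eq, CSext_eq]
  have h1 := integral_Pker (n := n) hs hz
  unfold Hc
  simp_rw [mul_sub]
  rw [integral_sub (kc_conv_int (bb_gt hs) hz hv hM y)
    (((kc_integrable (bb_gt hs) hz).comp_sub_left y).mul_const c), integral_mul_const,
    integral_sub_left_eq_self (kc n (bb n s) z) volume y]
  linear_combination (-c) * h1

lemma Nf_const_sub (hs : 0 < s) {z : ℝ} (hz : 0 < z) {v : En n → ℝ} (hv : Continuous v) {M : ℝ}
    (hM : ∀ a, |v a| ≤ M) (y : En n) (c : ℝ) :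
    Nf n s (fun a => v a - c) y z = Nf n s v y z := by
  have d1 := (hasDerivAt_CSext hs hz hv hM y).sub_const c
  have d2 := hasDerivAt_CSext (n := n) (g := fun a => v a - c) (M := M + |c|) hs hz
    (hv.sub continuous_const) (fun a => (abs_sub _ _).trans (by linarith [hM a])) y
  have e : (fun z => CSext n s v y z - c) =ᶠ[𝓝 z] CSext n s (fun a => v a - c) y := by
    filter_upwards [lt_mem_nhds hz] with t ht
    exact (Hc_const_sub hs ht hv hM y c).symm
  have := d2.unique (d1.congr_of_eventuallyEq e.symm)
  exact mul_left_cancel₀ (Real.rpow_pos_of_pos hz _).ne' this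

lemma gen_le {p s b z h0 h1 J : ℝ} (hp : 0 < p) (hs : 0 < s) (hb : 0 < b)
    (e0 : |h0| ≤ J) (e1 : z ^ 2 * |h1| ≤ J) :
    |p * (2 * s * h0 - 2 * b * z ^ 2 * h1)| ≤ p * (2 * s + 2 * b) * J := by
  have e : p * (2 * s + 2 * b) * J = p * ((2 * s + 2 * b) * J) := by ring
  rw [abs_mul, abs_of_pos hp, e]
  refine mul_le_mul_of_nonneg_left ?_ hp.le
  refine (abs_sub _ _).trans ?_
  rw [abs_mul (2 * s) h0, abs_mul (2 * b * z ^ 2) h1, abs_of_pos (show 0 < 2 * s by positivity),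
    abs_of_nonneg (show 0 ≤ 2 * b * z ^ 2 by positivity)]
  nlinarith

lemma Rf_le (hs : 0 < s) {z : ℝ} (hz : 0 < z) (w : En n) :
    |Rf n s w z| ≤ pns n s * (2 * s + 2 * bb n s) * kc n (bb n s) z w := by
  refine gen_le (pns_pos hs) hs (bb_pos hs) (abs_of_pos (kc_pos _ hz w)).le ?_
  rw [abs_of_pos (kc_pos _ hz w)]
  exact kc_succ_le _ hz w

/-- the moment constant -/
def Iα (n : ℕ) (s α : ℝ) : ℝ := ∫ w, kc n (bb n s) 1 w * ‖w‖ ^ α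

lemma Iα_nonneg (α : ℝ) : 0 ≤ Iα n s α :=
  integral_nonneg fun w => mul_nonneg (kc_pos _ one_pos w).le (by positivity)

lemma moment_shift {z α : ℝ} (hz : 0 < z) (y : En n) :
    ∫ a, kc n (bb n s) z (y - a) * ‖y - a‖ ^ α = z ^ (α - 2 * s) * Iα n s α := by
  rw [integral_sub_left_eq_self (fun w => kc n (bb n s) z w * ‖w‖ ^ α) volume y, kc_moment_scale hz]
  rfl

lemma Hc_holder {z α L : ℝ} (hα0 : 0 ≤ α) (hα : α < 2 * s) (hz : 0 < z)
    {v : En n → ℝ} (hL : ∀ a b, |v a - v b| ≤ L * ‖a - b‖ ^ α) (y : En n) :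
    |Hc n (bb n s) (fun a => v a - v y) y z| ≤ L * (z ^ (α - 2 * s) * Iα n s α) ∧
    z ^ 2 * |Hc n (bb n s + 1) (fun a => v a - v y) y z| ≤ L * (z ^ (α - 2 * s) * Iα n s α) := by
  have hi := ((kc_moment_integrable (n := n) hα0 hα hz).comp_sub_left y).const_mul L
  rw [← moment_shift hz y, ← integral_const_mul]
  constructor
  · unfold Hc
    rw [← Real.norm_eq_abs]
    refine norm_integral_le_of_norm_le hi (Eventually.of_forall fun a => ?_)
    have h1 := kc_pos (bb n s) hz (y - a)
    have h2 := hL a y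
    rw [norm_mul, Real.norm_eq_abs, Real.norm_eq_abs, abs_of_pos h1]
    rw [norm_sub_rev a y] at h2
    nlinarith
  · unfold Hc
    rw [← abs_of_nonneg (sq_nonneg z), ← abs_mul, ← integral_const_mul, ← Real.norm_eq_abs]
    refine norm_integral_le_of_norm_le hi (Eventually.of_forall fun a => ?_)
    have h1 := kc_pos (bb n s + 1) hz (y - a)
    have h0 := kc_pos (bb n s) hz (y - a)
    have h2 := hL a y
    have h3 := kc_succ_le (bb n s) hz (y - a)
    rw [norm_mul, norm_mul, Real.norm_eq_abs, Real.norm_eq_abs, Real.norm_eq_abs, abs_of_pos h1,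
      abs_of_nonneg (sq_nonneg z), ← mul_assoc]
    rw [norm_sub_rev a y] at h2
    calc _ ≤ kc n (bb n s) z (y - a) * (L * ‖y - a‖ ^ α) := by gcongr
      _ = _ := by ring

lemma holder_est (hs : 0 < s) {α L : ℝ} (hα0 : 0 ≤ α) (hα : α < 2 * s)
    {v : En n → ℝ} (hv : ContDiff ℝ (⊤ : ℕ∞) v) (hc : HasCompactSupport v) (hL0 : 0 ≤ L)
    (hL : ∀ a b, |v a - v b| ≤ L * ‖a - b‖ ^ α) (x : En n) :
    ∃ C : ℝ, ∀ z, 0 < z →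
      |Bf n s v (v x) x z + ∫ y, (v y - v x) ^ 2 * Rf n s (x - y) z| ≤ C * z ^ (2 * α - 2 * s) := by
  obtain ⟨M, hM0, hM⟩ := bdd_of_compact hv.continuous hc
  have hp := pns_pos (n := n) hs
  have hb := bb_pos (n := n) hs
  set p := pns n s
  set b := bb n s
  have hI := Iα_nonneg (n := n) (s := s) α
  have hI0 := Iα_nonneg (n := n) (s := s) 0
  set Q := p * (2 * s + 2 * b) with hQ
  have hQ0 : 0 < Q := by positivity
  set A := p * (L * Iα n s α) with hA
  have hA0 : 0 ≤ A := by positivity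
  set N0 := Q * (L * Iα n s α) with hN0
  have hN00 : 0 ≤ N0 := by positivity
  refine ⟨(2 * p * N0 + A * Q) * (A * Iα n s 0 + 2 * L * Iα n s α), fun z hz => ?_⟩
  have ez : z ^ (2 * s) * z ^ (α - 2 * s) = z ^ α := by rw [← Real.rpow_add hz]; congr 1; ring
  have hδ : ∀ y, |CSext n s v y z - v y| ≤ A * z ^ α := fun y => by
    rw [← Hc_const_sub hs hz hv.continuous hM y (v y), CSext_eq, abs_mul, abs_of_nonneg (by positivity)]
    calc _ ≤ p * z ^ (2 * s) * (L * (z ^ (α - 2 * s) * Iα n s α)) := by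
          gcongr; exact (Hc_holder hα0 hα hz hL y).1
      _ = _ := by rw [← ez]; ring
  have hN : ∀ y, |Nf n s v y z| ≤ N0 * z ^ (α - 2 * s) := fun y => by
    rw [← Nf_const_sub hs hz hv.continuous hM y (v y)]
    refine (gen_le hp hs hb (Hc_holder hα0 hα hz hL y).1 (Hc_holder hα0 hα hz hL y).2).trans ?_
    rw [hN0, hQ]; apply le_of_eq; ring
  have hpt : ∀ y, |Jf n s v (v x) x z y + (v y - v x) ^ 2 * Rf n s (x - y) z|
      ≤ (2 * p * N0 + A * Q) * z ^ α * (A * z ^ α * kc n b z (x - y)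
        + 2 * L * (kc n b z (x - y) * ‖x - y‖ ^ α)) := fun y => by
    have hk := kc_pos b hz (x - y)
    have hd : |v y - v x| ≤ L * ‖x - y‖ ^ α := by rw [norm_sub_rev x y]; exact hL y x
    have hR := Rf_le (n := n) hs hz (x - y)
    set k := kc n b z (x - y) with hk'
    have hδy := hδ y
    have hNy := hN y
    set δ := CSext n s v y z - v y with hδ'
    set d := v y - v x
    set r := ‖x - y‖ ^ α
    have hr : 0 ≤ r := by positivity
    have hza : 0 ≤ z ^ α := by positivity
    have hD : CSext n s v y z - v x = δ + d := by ring
    have eq : Jf n s v (v x) x z y + d ^ 2 * Rf n s (x - y) z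
        = 2 * (p * z ^ (2 * s) * k) * (δ + d) * Nf n s v y z - δ * (δ + 2 * d) * Rf n s (x - y) z := by
      unfold Jf; rw [hD, Pker_eq]; ring
    rw [eq]
    refine (abs_sub _ _).trans ?_
    have b1 : |δ + d| ≤ A * z ^ α + 2 * L * r := by
      have := abs_add_le δ d
      nlinarith [mul_nonneg hL0 hr]
    have b2 : |δ + 2 * d| ≤ A * z ^ α + 2 * L * r := by
      have := abs_add_le δ (2 * d)
      rw [abs_mul, abs_two] at this
      nlinarith [mul_nonneg hL0 hr]
    have t1 : |2 * (p * z ^ (2 * s) * k) * (δ + d) * Nf n s v y z|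
        ≤ 2 * (p * z ^ (2 * s) * k) * (A * z ^ α + 2 * L * r) * (N0 * z ^ (α - 2 * s)) := by
      rw [abs_mul, abs_mul, abs_of_nonneg (show 0 ≤ 2 * (p * z ^ (2 * s) * k) by positivity)]
      gcongr
    have t2 : |δ * (δ + 2 * d) * Rf n s (x - y) z| ≤ (A * z ^ α) * (A * z ^ α + 2 * L * r) * (Q * k) := by
      rw [abs_mul, abs_mul]
      gcongr
    refine (add_le_add t1 t2).trans (le_of_eq ?_)
    linear_combination (2 * p * k * (A * z ^ α + 2 * L * r) * N0) * ez
  have iα := (kc_moment_integrable (n := n) (s := s) hα0 hα hz).comp_sub_left x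
  have i0 := (kc_integrable (bb_gt (n := n) hs) hz).comp_sub_left x
  have ib : Integrable (fun y => (2 * p * N0 + A * Q) * z ^ α * (A * z ^ α * kc n b z (x - y)
        + 2 * L * (kc n b z (x - y) * ‖x - y‖ ^ α))) :=
    ((i0.const_mul _).add (iα.const_mul _)).const_mul _
  have cR : Continuous fun y => (v y - v x) ^ 2 * Rf n s (x - y) z :=
    ((hv.continuous.sub continuous_const).pow 2).mul
      ((Rf_cont (n := n) (s := s) hz).comp (continuous_const.sub continuous_id))
  have iR : Integrable fun y => (v y - v x) ^ 2 * Rf n s (x - y) z := by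
    refine (i0.const_mul ((2 * M) ^ 2 * Q)).mono' cR.aestronglyMeasurable
      (Eventually.of_forall fun y => ?_)
    rw [norm_mul, norm_pow, Real.norm_eq_abs, Real.norm_eq_abs, mul_assoc]
    have h1 : |v y - v x| ≤ 2 * M := (abs_sub _ _).trans (by linarith [hM y, hM x])
    have h2 := Rf_le (n := n) hs hz (x - y)
    gcongr
  have iT : Integrable fun y => Jf n s v (v x) x z y + (v y - v x) ^ 2 * Rf n s (x - y) z :=
    ib.mono' ((Jf_cont hz hv hc _ x).add cR).aestronglyMeasurable (Eventually.of_forall hpt)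
  have iJ : Integrable fun y => Jf n s v (v x) x z y := by
    refine (iT.sub iR).congr (Eventually.of_forall fun y => ?_)
    simp
  unfold Bf
  rw [← integral_add iJ iR, ← Real.norm_eq_abs]
  refine (norm_integral_le_of_norm_le ib (Eventually.of_forall hpt)).trans (le_of_eq ?_)
  rw [integral_const_mul, integral_add (i0.const_mul _) (iα.const_mul _), integral_const_mul,
    integral_const_mul, moment_shift hz x]
  have e0 := moment_shift (n := n) (s := s) (α := 0) hz x
  simp only [Real.rpow_zero, mul_one, zero_sub] at e0
  rw [e0]
  have f1 : z ^ α * (z ^ α * z ^ (-(2 * s))) = z ^ (2 * α - 2 * s) := by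
    rw [← Real.rpow_add hz, ← Real.rpow_add hz]; congr 1; ring
  have f2 : z ^ α * z ^ (α - 2 * s) = z ^ (2 * α - 2 * s) := by
    rw [← Real.rpow_add hz]; congr 1; ring
  linear_combination (2 * p * N0 + A * Q) * A * Iα n s 0 * f1 + (2 * p * N0 + A * Q) * 2 * L * Iα n s α * f2

end
section
variable {n : ℕ} {s : ℝ}

/-- weight dominating the singular integrals -/
def Wt (n : ℕ) (s : ℝ) (h : En n) : ℝ := min 1 (‖h‖ ^ 2) / ‖h‖ ^ ((n : ℝ) + 2 * s)

lemma Wt_nonneg (h : En n) : 0 ≤ Wt n s h := by unfold Wt; positivity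

lemma Wt_integrable (hn : 1 ≤ n) (hs : 0 < s) (hs1 : s < 1) : Integrable (Wt n s) := by
  have : Nonempty (Fin n) := ⟨⟨0, hn⟩⟩
  have key := (integrable_fun_norm_addHaar (E := En n) (volume : Measure (En n))
    (f := fun r : ℝ => min 1 (r ^ 2) / r ^ ((n : ℝ) + 2 * s))).2
  apply key
  rw [finrank_euclideanSpace_fin, ← Ioc_union_Ioi_eq_Ioi (zero_le_one' ℝ), integrableOn_union]
  have e0 : ∀ r : ℝ, 0 < r → r ^ (n - 1) = r ^ ((n : ℝ) - 1) := fun r hr => by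
    rw [← Real.rpow_natCast, Nat.cast_sub hn, Nat.cast_one]
  constructor
  · have h1 : IntegrableOn (fun r : ℝ => r ^ (1 - 2 * s)) (Ioc 0 1) := by
      rw [← intervalIntegrable_iff_integrableOn_Ioc_of_le zero_le_one]
      exact intervalIntegral.intervalIntegrable_rpow' (by linarith)
    refine h1.congr_fun (fun r hr => ?_) measurableSet_Ioc
    have hr0 : 0 < r := hr.1
    have : min 1 (r ^ 2) = r ^ 2 := min_eq_right (by nlinarith [hr.1, hr.2])
    simp only [smul_eq_mul]
    rw [this, e0 r hr0, ← Real.rpow_two, div_eq_mul_inv, ← Real.rpow_neg hr0.le,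
      ← Real.rpow_add hr0, ← Real.rpow_add hr0]
    congr 1; ring
  · have h1 : IntegrableOn (fun r : ℝ => r ^ (-1 - 2 * s)) (Ioi 1) :=
      integrableOn_Ioi_rpow_of_lt (by linarith) one_pos
    refine h1.congr_fun (fun r hr => ?_) measurableSet_Ioi
    have hr1 : 1 < r := hr
    have hr0 : 0 < r := by linarith
    have : min 1 (r ^ 2) = 1 := min_eq_left (by nlinarith)
    simp only [smul_eq_mul]
    rw [this, e0 r hr0, one_div, ← Real.rpow_neg hr0.le, ← Real.rpow_add hr0]
    congr 1; ring

lemma lip_min {v : En n → ℝ} (hv : ContDiff ℝ (⊤ : ℕ∞) v) (hc : HasCompactSupport v) :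
    ∃ K, 0 < K ∧ ∀ a b, |v a - v b| ≤ K * min 1 ‖a - b‖ := by
  obtain ⟨M, hM0, hM⟩ := bdd_of_compact hv.continuous hc
  obtain ⟨C, hC⟩ := ContDiff.lipschitzWith_of_hasCompactSupport hc hv (by simp)
  refine ⟨2 * M + C, by positivity, fun a b => ?_⟩
  have h1 : |v a - v b| ≤ 2 * M := (abs_sub _ _).trans (by linarith [hM a, hM b])
  have h2 : |v a - v b| ≤ C * ‖a - b‖ := by
    have := hC.dist_le_mul a b
    rwa [Real.dist_eq, dist_eq_norm] at this
  have hC0 : (0 : ℝ) ≤ C := C.2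
  rcases le_total 1 ‖a - b‖ with h | h
  · rw [min_eq_left h]; linarith
  · rw [min_eq_right h]
    nlinarith [norm_nonneg (a - b)]

lemma holder_all {v : En n → ℝ} (hv : ContDiff ℝ (⊤ : ℕ∞) v) (hc : HasCompactSupport v) :
    ∃ K, 0 < K ∧ ∀ α : ℝ, 0 ≤ α → α ≤ 1 → ∀ a b, |v a - v b| ≤ K * ‖a - b‖ ^ α := by
  obtain ⟨K, hK, h⟩ := lip_min hv hc
  refine ⟨K, hK, fun α h0 h1 a b => (h a b).trans ?_⟩
  refine mul_le_mul_of_nonneg_left ?_ hK.le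
  rcases le_total 1 ‖a - b‖ with h | h
  · rw [min_eq_left h]; exact Real.one_le_rpow h h0
  · rw [min_eq_right h]
    have := Real.rpow_le_rpow_of_exponent_ge' (norm_nonneg (a - b)) h h0 h1
    rwa [Real.rpow_one] at this

lemma norm_kc (w : En n) : (‖w‖ ^ 2) ^ (-(bb n s)) = (‖w‖ ^ ((n : ℝ) + 2 * s))⁻¹ := by
  rw [← Real.rpow_two, ← Real.rpow_mul (norm_nonneg w), ← Real.rpow_neg (norm_nonneg w)]
  congr 1; unfold bb; ring

lemma kc_le_inv (hs : 0 < s) {w : En n} (hw : w ≠ 0) (z : ℝ) :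
    kc n (bb n s) z w ≤ (‖w‖ ^ ((n : ℝ) + 2 * s))⁻¹ := by
  rw [← norm_kc]
  have : 0 < ‖w‖ := norm_pos_iff.2 hw
  exact Real.rpow_le_rpow_of_nonpos (by positivity) (by nlinarith [sq_nonneg z])
    (by linarith [bb_pos (n := n) hs])

lemma Rf_lim {w : En n} (hw : w ≠ 0) :
    Tendsto (fun z => Rf n s w z) (𝓝[>] 0) (𝓝 (2 * s * pns n s / ‖w‖ ^ ((n : ℝ) + 2 * s))) := by
  have hw' : 0 < ‖w‖ := norm_pos_iff.2 hw
  have h : ContinuousAt (fun z => Rf n s w z) 0 := by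
    have hk : ∀ β : ℝ, ContinuousAt (fun z => kc n β z w) 0 := fun β => by
      unfold kc
      refine ContinuousAt.rpow_const (by fun_prop) (Or.inl (by positivity))
    unfold Rf
    have h1 := hk (bb n s)
    have h2 := hk (bb n s + 1)
    fun_prop
  have h0 : Rf n s w 0 = 2 * s * pns n s / ‖w‖ ^ ((n : ℝ) + 2 * s) := by
    unfold Rf kc
    have := norm_kc (s := s) w
    simp only [ne_eq, OfNat.ofNat_ne_zero, not_false_eq_true, zero_pow, add_zero, mul_zero, zero_mul,
      sub_zero]
    rw [this]; ring
  rw [← h0]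
  exact h.tendsto.mono_left nhdsWithin_le_nhds

/-- squared-difference energy -/
def Sq (n : ℕ) (s : ℝ) (v : En n → ℝ) (x : En n) : ℝ :=
  ∫ y, (v y - v x) ^ 2 / ‖x - y‖ ^ ((n : ℝ) + 2 * s)

lemma sq_le_Wt {v : En n → ℝ} (hv : ContDiff ℝ (⊤ : ℕ∞) v) (hc : HasCompactSupport v) :
    ∃ K, 0 < K ∧ ∀ x y, (v y - v x) ^ 2 / ‖x - y‖ ^ ((n : ℝ) + 2 * s) ≤ K * Wt n s (x - y) := by
  obtain ⟨K, hK, h⟩ := lip_min hv hc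
  refine ⟨K ^ 2, by positivity, fun x y => ?_⟩
  unfold Wt
  rw [← mul_div_assoc]
  refine div_le_div_of_nonneg_right ?_ (by positivity)
  have h1 := h y x
  rw [norm_sub_rev] at h1
  have h0 : 0 ≤ min 1 ‖x - y‖ := by positivity
  have h2 : (min 1 ‖x - y‖) ^ 2 ≤ min 1 (‖x - y‖ ^ 2) := by
    refine le_min ?_ ?_
    · exact pow_le_one₀ h0 (min_le_left _ _)
    · exact pow_le_pow_left₀ h0 (min_le_right _ _) 2
  calc (v y - v x) ^ 2 = |v y - v x| ^ 2 := (sq_abs _).symm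
    _ ≤ (K * min 1 ‖x - y‖) ^ 2 := by gcongr
    _ = K ^ 2 * (min 1 ‖x - y‖) ^ 2 := by ring
    _ ≤ _ := by gcongr

lemma R_lim_zero (hn : 1 ≤ n) (hs : 0 < s) (hs1 : s < 1)
    {v : En n → ℝ} (hv : ContDiff ℝ (⊤ : ℕ∞) v) (hc : HasCompactSupport v) (x : En n) :
    Tendsto (fun z => ∫ y, (v y - v x) ^ 2 * Rf n s (x - y) z) (𝓝[>] 0)
      (𝓝 (2 * s * pns n s * Sq n s v x)) := by
  obtain ⟨K, hK, h⟩ := sq_le_Wt (s := s) hv hc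
  unfold Sq
  rw [← integral_const_mul]
  have hp := pns_pos (n := n) hs
  have hb := bb_pos (n := n) hs
  refine tendsto_integral_filter_of_dominated_convergence
    (fun y => pns n s * (2 * s + 2 * bb n s) * (K * Wt n s (x - y))) ?_ ?_ ?_ ?_
  · filter_upwards [self_mem_nhdsWithin] with z hz
    exact (((hv.continuous.sub continuous_const).pow 2).mul
      ((Rf_cont (n := n) (s := s) hz).comp (continuous_const.sub continuous_id))).aestronglyMeasurable
  · filter_upwards [self_mem_nhdsWithin] with z hz
    refine Eventually.of_forall fun y => ?_
    rw [norm_mul, norm_pow, Real.norm_eq_abs, Real.norm_eq_abs, sq_abs]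
    by_cases hw : x - y = 0
    · have : y = x := (sub_eq_zero.1 hw).symm
      subst this
      simp only [sub_self, ne_eq, OfNat.ofNat_ne_zero, not_false_eq_true, zero_pow, zero_mul]
      have := Wt_nonneg (s := s) (0 : En n)
      positivity
    · have h1 := Rf_le (n := n) hs hz (x - y)
      have h2 := kc_le_inv hs hw z
      calc _ ≤ (v y - v x) ^ 2 * (pns n s * (2 * s + 2 * bb n s) * (‖x - y‖ ^ ((n : ℝ) + 2 * s))⁻¹) := by
            refine mul_le_mul_of_nonneg_left (h1.trans ?_) (sq_nonneg _)
            exact mul_le_mul_of_nonneg_left h2 (by positivity)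
        _ = pns n s * (2 * s + 2 * bb n s) * ((v y - v x) ^ 2 / ‖x - y‖ ^ ((n : ℝ) + 2 * s)) := by
            rw [div_eq_mul_inv]; ring
        _ ≤ _ := mul_le_mul_of_nonneg_left (h x y) (by positivity)
  · exact (((Wt_integrable hn hs hs1).comp_sub_left x).const_mul K).const_mul _
  · refine Eventually.of_forall fun y => ?_
    by_cases hw : x - y = 0
    · have : y = x := (sub_eq_zero.1 hw).symm
      subst this
      simp
    · have := (Rf_lim (s := s) hw).const_mul ((v y - v x) ^ 2)
      convert this using 2
      ring

lemma R_lim_top (hs : 0 < s)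
    {v : En n → ℝ} (hv : ContDiff ℝ (⊤ : ℕ∞) v) (hc : HasCompactSupport v) (x : En n) :
    Tendsto (fun z => ∫ y, (v y - v x) ^ 2 * Rf n s (x - y) z) atTop (𝓝 0) := by
  obtain ⟨M, hM0, hM⟩ := bdd_of_compact hv.continuous hc
  have hp := pns_pos (n := n) hs
  have hb := bb_pos (n := n) hs
  set Q := pns n s * (2 * s + 2 * bb n s) with hQ
  have hQ0 : 0 < Q := by positivity
  have hz0 : Tendsto (fun z : ℝ => (2 * M) ^ 2 * Q * (z ^ (-(2 * s)) * Iα n s 0)) atTop (𝓝 0) := by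
    have := ((tendsto_rpow_neg_atTop (show 0 < 2 * s by positivity)).mul_const (Iα n s 0)).const_mul
      ((2 * M) ^ 2 * Q)
    simpa using this
  refine squeeze_zero_norm' ?_ hz0
  filter_upwards [eventually_gt_atTop 0] with z hz
  have e0 := moment_shift (n := n) (s := s) (α := 0) hz x
  simp only [Real.rpow_zero, mul_one, zero_sub] at e0
  have i0 := (kc_integrable (bb_gt (n := n) hs) hz).comp_sub_left x
  rw [← e0, ← integral_const_mul]
  refine norm_integral_le_of_norm_le (i0.const_mul _) (Eventually.of_forall fun y => ?_)
  rw [norm_mul, norm_pow, Real.norm_eq_abs, Real.norm_eq_abs, mul_assoc]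
  have h1 : |v y - v x| ≤ 2 * M := (abs_sub _ _).trans (by linarith [hM y, hM x])
  have h2 := Rf_le (n := n) hs hz (x - y)
  gcongr

lemma Bf_lim_top (hs : 0 < s)
    {v : En n → ℝ} (hv : ContDiff ℝ (⊤ : ℕ∞) v) (hc : HasCompactSupport v) (x : En n) :
    Tendsto (Bf n s v (v x) x) atTop (𝓝 0) := by
  obtain ⟨K, hK, h⟩ := holder_all hv hc
  obtain ⟨C, hC⟩ := holder_est hs le_rfl (by positivity) hv hc hK.le (h 0 le_rfl zero_le_one) x
  have h1 : Tendsto (fun z => Bf n s v (v x) x z + ∫ y, (v y - v x) ^ 2 * Rf n s (x - y) z)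
      atTop (𝓝 0) := by
    have hz0 : Tendsto (fun z : ℝ => C * z ^ (2 * 0 - 2 * s)) atTop (𝓝 0) := by
      have := (tendsto_rpow_neg_atTop (show 0 < 2 * s by positivity)).const_mul C
      simpa using this
    refine squeeze_zero_norm' ?_ hz0
    filter_upwards [eventually_gt_atTop 0] with z hz
    exact hC z hz
  have := h1.sub (R_lim_top hs hv hc x)
  simpa using this

lemma Bf_lim_zero (hn : 1 ≤ n) (hs : 0 < s) (hs1 : s < 1)
    {v : En n → ℝ} (hv : ContDiff ℝ (⊤ : ℕ∞) v) (hc : HasCompactSupport v) (x : En n) :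
    Tendsto (Bf n s v (v x) x) (𝓝[>] 0) (𝓝 (-(2 * s * pns n s * Sq n s v x))) := by
  obtain ⟨K, hK, h⟩ := holder_all hv hc
  obtain ⟨α, hα1, hα2⟩ : ∃ α, s < α ∧ α < min 1 (2 * s) := exists_between (lt_min hs1 (by linarith))
  obtain ⟨C, hC⟩ := holder_est hs (by linarith) (hα2.trans_le (min_le_right _ _)) hv hc hK.le
    (h α (by linarith) (hα2.trans_le (min_le_left _ _)).le) x
  have h1 : Tendsto (fun z => Bf n s v (v x) x z + ∫ y, (v y - v x) ^ 2 * Rf n s (x - y) z)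
      (𝓝[>] 0) (𝓝 0) := by
    have hz0 : Tendsto (fun z : ℝ => C * z ^ (2 * α - 2 * s)) (𝓝[>] 0) (𝓝 0) := by
      have h2 : ContinuousAt (fun z : ℝ => C * z ^ (2 * α - 2 * s)) 0 :=
        continuousAt_const.mul (continuousAt_id.rpow_const (Or.inr (by linarith)))
      have h3 := h2.tendsto
      rw [Real.zero_rpow (by linarith), mul_zero] at h3
      exact h3.mono_left nhdsWithin_le_nhds
    refine squeeze_zero_norm' ?_ hz0
    filter_upwards [self_mem_nhdsWithin] with z hz
    exact hC z hz
  have := h1.sub (R_lim_zero hn hs hs1 hv hc x)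
  simpa using this

theorem energy_id (hn : 1 ≤ n) (hs : 0 < s) (hs1 : s < 1)
    {v : En n → ℝ} (hv : ContDiff ℝ (⊤ : ℕ∞) v) (hc : HasCompactSupport v) (x : En n) :
    IntegrableOn (fun z => Pconv n s z (En2 n s v z) x * z ^ (1 - 2 * s)) (Ioi 0) ∧
    ∫ z in Ioi 0, Pconv n s z (En2 n s v z) x * z ^ (1 - 2 * s) = s * pns n s * Sq n s v x := by
  set l := -(2 * s * pns n s * Sq n s v x) with hl
  set g : ℝ → ℝ := Function.update (Bf n s v (v x) x) 0 l with hg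
  have hd : ∀ z ∈ Ioi (0 : ℝ), HasDerivAt g (2 * (Pconv n s z (En2 n s v z) x * z ^ (1 - 2 * s))) z := by
    intro z hz
    refine (hasDerivAt_Bf hs hz hv hc (v x) x).congr_of_eventuallyEq ?_
    filter_upwards [lt_mem_nhds hz] with t ht
    rw [hg, Function.update_of_ne ht.ne']
  have hcont : ContinuousWithinAt g (Ici 0) 0 := by
    rw [hg, continuousWithinAt_update_same]
    have : Ici (0 : ℝ) \ {0} = Ioi 0 := by ext t; simp [lt_iff_le_and_ne, eq_comm]
    rw [this]
    exact Bf_lim_zero hn hs hs1 hv hc x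
  have hpos : ∀ z ∈ Ioi (0 : ℝ), 0 ≤ 2 * (Pconv n s z (En2 n s v z) x * z ^ (1 - 2 * s)) := by
    intro z hz
    have : 0 ≤ Pconv n s z (En2 n s v z) x :=
      integral_nonneg fun y => mul_nonneg (Pker_nonneg hs hz _) (by unfold En2; positivity)
    have hz' : (0 : ℝ) < z := hz
    positivity
  have ht : Tendsto g atTop (𝓝 0) := by
    refine (Bf_lim_top hs hv hc x).congr' ?_
    filter_upwards [eventually_gt_atTop 0] with t ht
    rw [hg, Function.update_of_ne ht.ne']
  have h1 := integrableOn_Ioi_deriv_of_nonneg hcont hd hpos ht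
  have h2 := integral_Ioi_of_hasDerivAt_of_nonneg hcont hd hpos ht
  constructor
  · refine (h1.const_mul (1 / 2)).congr (Eventually.of_forall fun z => ?_)
    simp only; ring
  · rw [integral_const_mul] at h2
    have : g 0 = l := by rw [hg, Function.update_self]
    rw [this, hl] at h2
    linarith

end
section
variable {n : ℕ} {s : ℝ}

/-- symmetric second difference -/
def D2 {n : ℕ} {F : Type*} [NormedAddCommGroup F] [NormedSpace ℝ F] (f : En n → F) (x h : En n) : F :=
  (f x - f (x + h)) + (f x - f (x - h))

lemma D2_le {F : Type*} [NormedAddCommGroup F] [NormedSpace ℝ F] {f : En n → F}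
    (hf : ContDiff ℝ (⊤ : ℕ∞) f) (hc : HasCompactSupport f) :
    ∃ K, 0 < K ∧ ∀ x h, ‖D2 f x h‖ ≤ K * min 1 (‖h‖ ^ 2) := by
  obtain ⟨M, hM⟩ := hc.exists_bound_of_continuous hf.continuous
  have hM0 : 0 ≤ M := (norm_nonneg _).trans (hM 0)
  have hf' : ContDiff ℝ (⊤ : ℕ∞) (fderiv ℝ f) := hf.fderiv_right (by simp)
  obtain ⟨C, hC⟩ := ContDiff.lipschitzWith_of_hasCompactSupport (hc.fderiv ℝ) hf' (by simp)
  have hC0 : (0 : ℝ) ≤ C := C.2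
  have hd : Differentiable ℝ f := hf.differentiable (by simp)
  have key : ∀ x h, ‖f (x + h) - f x - fderiv ℝ f x h‖ ≤ C * ‖h‖ * ‖h‖ := fun x h => by
    have := (convex_closedBall x ‖h‖).norm_image_sub_le_of_norm_fderiv_le' (𝕜 := ℝ) (f := f)
      (φ := fderiv ℝ f x) (C := C * ‖h‖) (x := x) (y := x + h) (fun y _ => hd y) (fun y hy => ?_)
      (by simp) (by simp)
    · simpa using this
    · rw [← dist_eq_norm]
      refine (hC.dist_le_mul y x).trans ?_
      rw [mem_closedBall_iff_norm] at hy
      rw [dist_eq_norm]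
      gcongr
  refine ⟨4 * M + 2 * C + 1, by positivity, fun x h => ?_⟩
  have h1 : ‖D2 f x h‖ ≤ 4 * M := by
    unfold D2
    refine (norm_add_le _ _).trans ?_
    have a1 := norm_sub_le (f x) (f (x + h))
    have a2 := norm_sub_le (f x) (f (x - h))
    linarith [hM x, hM (x + h), hM (x - h)]
  have h2 : ‖D2 f x h‖ ≤ 2 * C * ‖h‖ ^ 2 := by
    have e : D2 f x h = -(f (x + h) - f x - fderiv ℝ f x h) - (f (x + -h) - f x - fderiv ℝ f x (-h)) := by
      unfold D2; rw [map_neg, ← sub_eq_add_neg]; abel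
    rw [e]
    refine (norm_sub_le _ _).trans ?_
    have a1 := key x h
    have a2 := key x (-h)
    rw [norm_neg h] at a2
    rw [norm_neg]
    nlinarith
  rcases le_total 1 (‖h‖ ^ 2) with h | h
  · rw [min_eq_left h]; linarith
  · rw [min_eq_right h]
    refine h2.trans ?_
    gcongr
    linarith

/-- the symmetrized singular integral -/
def Tf (n : ℕ) (s : ℝ) (v : En n → ℝ) (x : En n) : ℝ :=
  ∫ h, D2 v x h / ‖h‖ ^ ((n : ℝ) + 2 * s)

lemma D2_cont {F : Type*} [NormedAddCommGroup F] [NormedSpace ℝ F] {f : En n → F}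
    (hf : Continuous f) (x : En n) : Continuous (D2 f x) := by
  unfold D2; fun_prop

lemma normp_meas : Measurable fun h : En n => ‖h‖ ^ ((n : ℝ) + 2 * s) :=
  measurable_norm.pow_const _

lemma D2_div_int (hn : 1 ≤ n) (hs : 0 < s) (hs1 : s < 1) {v : En n → ℝ}
    (hv : ContDiff ℝ (⊤ : ℕ∞) v) (hc : HasCompactSupport v) (x : En n) :
    Integrable fun h => D2 v x h / ‖h‖ ^ ((n : ℝ) + 2 * s) := by
  obtain ⟨K, hK, h⟩ := D2_le hv hc
  refine ((Wt_integrable hn hs hs1).const_mul K).mono'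
    ((D2_cont hv.continuous x).measurable.div normp_meas).aestronglyMeasurable
    (Eventually.of_forall fun w => ?_)
  rw [norm_div, Real.norm_of_nonneg (show 0 ≤ ‖w‖ ^ ((n : ℝ) + 2 * s) by positivity)]
  unfold Wt
  rw [← mul_div_assoc]
  exact div_le_div_of_nonneg_right (h x w) (by positivity)

lemma pv_eq (hn : 1 ≤ n) (hs : 0 < s) (hs1 : s < 1) {v : En n → ℝ}
    (hv : ContDiff ℝ (⊤ : ℕ∞) v) (hc : HasCompactSupport v) (x : En n) {ε : ℝ} (hε : 0 < ε) :
    ∫ y in {y : En n | ε < ‖x - y‖}, (v x - v y) / ‖x - y‖ ^ ((n : ℝ) + 2 * s) =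
      (1 / 2) * ∫ h, {h : En n | ε < ‖h‖}.indicator (fun h => D2 v x h / ‖h‖ ^ ((n : ℝ) + 2 * s)) h := by
  obtain ⟨K, hK, hl⟩ := lip_min hv hc
  have ms : MeasurableSet {h : En n | ε < ‖h‖} := measurableSet_lt measurable_const measurable_norm
  have ms' : MeasurableSet {y : En n | ε < ‖x - y‖} :=
    measurableSet_lt measurable_const (measurable_const.sub measurable_id).norm
  set G : En n → ℝ := {h : En n | ε < ‖h‖}.indicator
    (fun h => (v x - v (x - h)) / ‖h‖ ^ ((n : ℝ) + 2 * s)) with hG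
  have e1 : ∫ y in {y : En n | ε < ‖x - y‖}, (v x - v y) / ‖x - y‖ ^ ((n : ℝ) + 2 * s) = ∫ h, G h := by
    rw [← integral_sub_left_eq_self G volume x, ← integral_indicator ms']
    congr 1; ext y
    simp only [hG, indicator, mem_ofPred_eq, sub_sub_cancel]
  have hm : 0 < min 1 (ε ^ 2) := by positivity
  have iG : Integrable G := by
    refine ((Wt_integrable hn hs hs1).const_mul (K / min 1 (ε ^ 2))).mono' ?_
      (Eventually.of_forall fun w => ?_)
    · have : Measurable fun h => v x - v (x - h) := by
        have := hv.continuous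
        exact Continuous.measurable (by fun_prop)
      exact ((this.div normp_meas).indicator ms).aestronglyMeasurable
    · simp only [hG, indicator, mem_ofPred_eq]
      split_ifs with hw
      · rw [norm_div, Real.norm_of_nonneg (show 0 ≤ ‖w‖ ^ ((n : ℝ) + 2 * s) by positivity)]
        unfold Wt
        rw [← mul_div_assoc]
        refine div_le_div_of_nonneg_right ?_ (by positivity)
        have h1 : ‖v x - v (x - w)‖ ≤ K := by
          refine (hl x (x - w)).trans ?_
          have := min_le_left 1 ‖x - (x - w)‖
          nlinarith
        have h2 : min 1 (ε ^ 2) ≤ min 1 (‖w‖ ^ 2) := by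
          refine min_le_min le_rfl ?_
          gcongr
        refine h1.trans ?_
        rw [div_mul_eq_mul_div, le_div_iff₀ hm]
        gcongr
      · rw [norm_zero]
        have := Wt_nonneg (s := s) w
        positivity
  have e2 : ∫ h, G (-h) = ∫ h, G h := integral_neg_eq_self G volume
  have e3 : ∫ h, {h : En n | ε < ‖h‖}.indicator (fun h => D2 v x h / ‖h‖ ^ ((n : ℝ) + 2 * s)) h
      = ∫ h, (G h + G (-h)) := by
    congr 1; ext h
    simp only [hG, indicator, mem_ofPred_eq, norm_neg, sub_neg_eq_add, D2]
    split_ifs <;> ring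
  rw [e1, e3, integral_add iG iG.comp_neg, e2]
  ring

lemma Lam_eq (hn : 1 ≤ n) (hs : 0 < s) (hs1 : s < 1) {v : En n → ℝ}
    (hv : ContDiff ℝ (⊤ : ℕ∞) v) (hc : HasCompactSupport v) (x : En n) :
    Lam n s v x = -(Cns n s / 2) * Tf n s v x := by
  have iD := D2_div_int hn hs hs1 hv hc x
  have h1 : Tendsto (fun ε : ℝ => ∫ h, {h : En n | ε < ‖h‖}.indicator
      (fun h => D2 v x h / ‖h‖ ^ ((n : ℝ) + 2 * s)) h) (𝓝[>] 0) (𝓝 (Tf n s v x)) := by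
    refine tendsto_integral_filter_of_dominated_convergence _ ?_ ?_ iD.norm ?_
    · refine Eventually.of_forall fun ε => ?_
      exact iD.aestronglyMeasurable.indicator (measurableSet_lt measurable_const measurable_norm)
    · exact Eventually.of_forall fun ε => Eventually.of_forall fun h => norm_indicator_le_norm_self _ _
    · refine Eventually.of_forall fun h => ?_
      by_cases hh : h = 0
      · subst hh
        simp [D2, indicator]
      · refine tendsto_const_nhds.congr' ?_
        filter_upwards [mem_nhdsWithin_of_mem_nhds (gt_mem_nhds (norm_pos_iff.2 hh))] with ε hε
        rw [indicator_of_mem]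
        exact hε
  have h2 : Tendsto (fun ε : ℝ => ∫ y in {y : En n | ε < ‖x - y‖},
      (v x - v y) / ‖x - y‖ ^ ((n : ℝ) + 2 * s)) (𝓝[>] 0) (𝓝 ((1 / 2) * Tf n s v x)) := by
    refine (h1.const_mul (1 / 2)).congr' ?_
    filter_upwards [self_mem_nhdsWithin] with ε hε
    exact (pv_eq hn hs hs1 hv hc x hε).symm
  unfold Lam fracLap
  rw [h2.limUnder_eq]
  ring

lemma D2_fderiv_apply (v : En n → ℝ) (i : Fin n) (x h : En n) :
    D2 (fderiv ℝ v) x h (EuclideanSpace.single i 1) = D2 (pd i v) x h := by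
  simp [D2, pd]

lemma Tf_pd (hn : 1 ≤ n) (hs : 0 < s) (hs1 : s < 1) {v : En n → ℝ}
    (hv : ContDiff ℝ (⊤ : ℕ∞) v) (hc : HasCompactSupport v) (i : Fin n) (x : En n) :
    HasFDerivAt (Tf n s v) (∫ h, (‖h‖ ^ ((n : ℝ) + 2 * s))⁻¹ • D2 (fderiv ℝ v) x h) x ∧
    pd i (Tf n s v) x = Tf n s (pd i v) x := by
  have hf' : ContDiff ℝ (⊤ : ℕ∞) (fderiv ℝ v) := hv.fderiv_right (by simp)
  obtain ⟨K, hK, hb⟩ := D2_le hf' (hc.fderiv ℝ)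
  have hd : Differentiable ℝ v := hv.differentiable (by simp)
  have mF' : ∀ x, AEStronglyMeasurable
      (fun h : En n => (‖h‖ ^ ((n : ℝ) + 2 * s))⁻¹ • D2 (fderiv ℝ v) x h) volume := fun x =>
    normp_meas.inv.aestronglyMeasurable.smul (D2_cont hf'.continuous x).aestronglyMeasurable
  have bF' : ∀ x h : En n, ‖(‖h‖ ^ ((n : ℝ) + 2 * s))⁻¹ • D2 (fderiv ℝ v) x h‖ ≤ K * Wt n s h := by
    intro x h
    rw [norm_smul, norm_inv, Real.norm_of_nonneg (show 0 ≤ ‖h‖ ^ ((n : ℝ) + 2 * s) by positivity)]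
    unfold Wt
    rw [← mul_div_assoc, div_eq_inv_mul]
    exact mul_le_mul_of_nonneg_left (hb x h) (by positivity)
  have iW := (Wt_integrable hn hs hs1).const_mul K
  have key : HasFDerivAt (Tf n s v) (∫ h, (‖h‖ ^ ((n : ℝ) + 2 * s))⁻¹ • D2 (fderiv ℝ v) x h) x := by
    refine hasFDerivAt_integral_of_dominated_of_fderiv_le (μ := volume)
      (F := fun x h => D2 v x h / ‖h‖ ^ ((n : ℝ) + 2 * s)) 
      (F' := fun x h => (‖h‖ ^ ((n : ℝ) + 2 * s))⁻¹ • D2 (fderiv ℝ v) x h) (s := univ) (bound := fun h => K * Wt n s h)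
      univ_mem ?_ (D2_div_int hn hs hs1 hv hc x) (mF' x) ?_ iW ?_
    · exact Eventually.of_forall fun y => (D2_div_int hn hs hs1 hv hc y).aestronglyMeasurable
    · exact Eventually.of_forall fun h y _ => bF' y h
    · refine Eventually.of_forall fun h y _ => ?_
      have d0 := (hd y).hasFDerivAt
      have d1 : HasFDerivAt (fun y => v (y + h)) (fderiv ℝ v (y + h)) y :=
        (hasFDerivAt_comp_add_right h).2 (hd (y + h)).hasFDerivAt
      have d2 : HasFDerivAt (fun y => v (y - h)) (fderiv ℝ v (y - h)) y :=
        (hasFDerivAt_comp_sub h).2 (hd (y - h)).hasFDerivAt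
      have := ((d0.sub d1).add (d0.sub d2)).const_smul ((‖h‖ ^ ((n : ℝ) + 2 * s))⁻¹)
      refine this.congr_of_eventuallyEq (Eventually.of_forall fun y => ?_)
      simp [D2, div_eq_inv_mul]
  refine ⟨key, ?_⟩
  unfold pd
  rw [key.fderiv, ContinuousLinearMap.integral_apply (iW.mono' (mF' x) (Eventually.of_forall (bF' x)))]
  unfold Tf
  congr 1; ext h
  rw [smul_apply, D2_fderiv_apply, smul_eq_mul, div_eq_inv_mul]
  rfl

lemma Lam_pd (hn : 1 ≤ n) (hs : 0 < s) (hs1 : s < 1) {v : En n → ℝ}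
    (hv : ContDiff ℝ (⊤ : ℕ∞) v) (hc : HasCompactSupport v) (i : Fin n) (x : En n) :
    pd i (Lam n s v) x = Lam n s (pd i v) x := by
  rw [Lam_eq hn hs hs1 (pd_contDiff i hv) (pd_compact i hc), ← (Tf_pd hn hs hs1 hv hc i x).2]
  have : Lam n s v = fun y => -(Cns n s / 2) * Tf n s v y := funext fun y => Lam_eq hn hs hs1 hv hc y
  rw [this]
  have d := (Tf_pd hn hs hs1 hv hc i x).1.const_mul (-(Cns n s / 2))
  unfold pd
  rw [d.fderiv, (Tf_pd hn hs hs1 hv hc i x).1.fderiv]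
  simp

lemma Tf_sum (hn : 1 ≤ n) (hs : 0 < s) (hs1 : s < 1) {w : Fin n → En n → ℝ}
    (hv : ∀ i, ContDiff ℝ (⊤ : ℕ∞) (w i)) (hc : ∀ i, HasCompactSupport (w i)) (x : En n) :
    Tf n s (fun y => ∑ i, w i y) x = ∑ i, Tf n s (w i) x := by
  unfold Tf
  rw [← integral_finsetSum _ fun i _ => D2_div_int hn hs hs1 (hv i) (hc i) x]
  congr 1; ext h
  rw [← Finset.sum_div]
  simp [D2, Finset.sum_add_distrib]

lemma Gamma_id (hn : 1 ≤ n) (hs : 0 < s) (hs1 : s < 1) {v : En n → ℝ}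
    (hv : ContDiff ℝ (⊤ : ℕ∞) v) (hc : HasCompactSupport v) (x : En n) :
    v x * Tf n s v x - (1 / 2) * Tf n s (fun y => v y ^ 2) x = Sq n s v x := by
  have hc2 : HasCompactSupport fun y => v y ^ 2 := by
    have := hc.mul_right (f' := v)
    have e : (fun y => v y ^ 2) = v * v := by ext y; simp [sq]
    rwa [e]
  have i1 := D2_div_int hn hs hs1 hv hc x
  have i2 := D2_div_int hn hs hs1 (hv.pow 2) hc2 x
  obtain ⟨K, hK, hS⟩ := sq_le_Wt (s := s) hv hc
  set G : En n → ℝ := fun h => (v (x - h) - v x) ^ 2 / ‖h‖ ^ ((n : ℝ) + 2 * s) with hG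
  have iG : Integrable G := by
    refine ((Wt_integrable hn hs hs1).const_mul K).mono' ?_ (Eventually.of_forall fun h => ?_)
    · have : Measurable fun h => (v (x - h) - v x) ^ 2 := by
        have := hv.continuous
        exact Continuous.measurable (by fun_prop)
      exact (this.div normp_meas).aestronglyMeasurable
    · have := hS x (x - h)
      rw [sub_sub_cancel] at this
      rwa [Real.norm_of_nonneg (by positivity)]
  have e1 : Sq n s v x = ∫ h, G h := by
    rw [← integral_sub_left_eq_self G volume x]
    unfold Sq
    simp only [hG, sub_sub_cancel]
  have e2 : ∫ h, G (-h) = ∫ h, G h := integral_neg_eq_self G volume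
  have e3 : ∫ h, (v x * (D2 v x h / ‖h‖ ^ ((n : ℝ) + 2 * s))
      - (1 / 2) * (D2 (fun y => v y ^ 2) x h / ‖h‖ ^ ((n : ℝ) + 2 * s)))
      = ∫ h, (1 / 2) * (G h + G (-h)) := by
    congr 1; ext h
    simp only [hG, norm_neg, sub_neg_eq_add, D2]
    ring
  rw [integral_sub (i1.const_mul _) (i2.const_mul _), integral_const_mul, integral_const_mul,
    integral_const_mul, integral_add iG iG.comp_neg, e2, ← e1] at e3
  unfold Tf
  linarith

lemma const_id (hs : 0 < s) (hs1 : s < 1) : betaS s * (s * pns n s) = Cns n s / 2 := by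
  have h1 : Real.Gamma (1 - s) = -s * Real.Gamma (-s) := by
    have := Real.Gamma_add_one (s := -s) (by linarith)
    rw [← this]; congr 1; ring
  have h2 : 0 < Real.Gamma (1 - s) := Real.Gamma_pos_of_pos (by linarith)
  have h3 : |Real.Gamma (-s)| = Real.Gamma (1 - s) / s := by
    have : Real.Gamma (-s) = -(Real.Gamma (1 - s) / s) := by rw [h1]; field_simp
    rw [this, abs_neg, abs_of_pos (by positivity)]
  have h4 : (2 : ℝ) ^ (2 * s - 1) = 4 ^ s / 2 := by
    rw [Real.rpow_sub two_pos, Real.rpow_one, Real.rpow_mul two_pos.le]; norm_num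
  have h5 := Real.Gamma_pos_of_pos hs
  have h6 : 0 < Real.pi ^ ((n : ℝ) / 2) := Real.rpow_pos_of_pos Real.pi_pos _
  unfold betaS pns Cns
  rw [h3, h4]
  field_simp

end
section
variable {n : ℕ} {s : ℝ}

lemma Nf_conv (hs : 0 < s) {z : ℝ} (hz : 0 < z) {v : En n → ℝ} (hv : Continuous v) {M : ℝ}
    (hM : ∀ a, |v a| ≤ M) (y : En n) :
    Nf n s v y z = ∫ a, Rf n s (y - a) z * v a := by
  have i0 := kc_conv_int (bb_gt (n := n) hs) hz hv hM y
  have i1 := kc_conv_int (β := bb n s + 1) (by linarith [bb_gt (n := n) hs]) hz hv hM y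
  unfold Nf Hc Rf
  rw [← integral_const_mul, ← integral_const_mul, ← integral_sub (i0.const_mul _) (i1.const_mul _),
    ← integral_const_mul]
  congr 1; ext a; ring

lemma deriv_CSext (hs : 0 < s) {z : ℝ} (hz : 0 < z) {v : En n → ℝ}
    (hv : ContDiff ℝ (⊤ : ℕ∞) v) (hc : HasCompactSupport v) (y : En n) :
    deriv (CSext n s v y) z = ∫ a, (z ^ (2 * s - 1) * Rf n s (y - a) z) * v a := by
  obtain ⟨M, hM0, hM⟩ := bdd_of_compact hv.continuous hc
  rw [(hasDerivAt_CSext hs hz hv.continuous hM y).deriv, Nf_conv hs hz hv.continuous hM,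
    ← integral_const_mul]
  congr 1; ext a; ring

lemma pd_deriv_CSext (hs : 0 < s) {z : ℝ} (hz : 0 < z) {v : En n → ℝ}
    (hv : ContDiff ℝ (⊤ : ℕ∞) v) (hc : HasCompactSupport v) (i : Fin n) (y : En n) :
    pd i (fun y => deriv (CSext n s v y) z) y = deriv (CSext n s (pd i v) y) z := by
  have e : (fun y => deriv (CSext n s v y) z)
      = fun y => ∫ a, (fun w => z ^ (2 * s - 1) * Rf n s w z) (y - a) * v a :=
    funext fun y => deriv_CSext hs hz hv hc y
  rw [e, conv_pd ((Rf_cont hz).const_mul _) hv hc i,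
    deriv_CSext hs hz (pd_contDiff i hv) (pd_compact i hc)]

lemma Pker_En2_int (hs : 0 < s) {z : ℝ} (hz : 0 < z) {v : En n → ℝ}
    (hv : ContDiff ℝ (⊤ : ℕ∞) v) (hc : HasCompactSupport v) (x : En n) :
    Integrable fun y => Pker n s z (x - y) * En2 n s v z y := by
  obtain ⟨M, hM0, hM⟩ := bdd_of_compact hv.continuous hc
  choose M1 h1p hM1 using fun i => bdd_of_compact (pd_contDiff i hv).continuous (pd_compact i hc)
  have e : En2 n s v z = fun y => (∑ i, CSext n s (pd i v) y z ^ 2) + (z ^ (2 * s - 1) * Nf n s v y z) ^ 2 := by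
    ext y
    unfold En2
    rw [(hasDerivAt_CSext hs hz hv.continuous hM y).deriv]
    simp only [CSext_pd hz hv hc]
  have i0 := kc_integrable (bb_gt (n := n) hs) hz
  set Q := pns n s * (2 * s + 2 * bb n s)
  have hQ : 0 < Q := by
    have := pns_pos (n := n) hs
    have := bb_pos (n := n) hs
    positivity
  have bN : ∀ y, |Nf n s v y z| ≤ Q * M * ∫ w, kc n (bb n s) z w := fun y => by
    rw [Nf_conv hs hz hv.continuous hM, ← integral_sub_left_eq_self (kc n (bb n s) z) volume y,
      ← integral_const_mul, ← Real.norm_eq_abs]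
    refine norm_integral_le_of_norm_le ((i0.comp_sub_left y).const_mul _) (Eventually.of_forall fun a => ?_)
    rw [norm_mul, Real.norm_eq_abs, Real.norm_eq_abs]
    calc _ ≤ (Q * kc n (bb n s) z (y - a)) * M :=
          mul_le_mul (Rf_le hs hz _) (hM a) (abs_nonneg _) (mul_nonneg hQ.le (kc_pos _ hz _).le)
      _ = _ := by ring
  have cE : Continuous (En2 n s v z) := by
    rw [e]
    have h1 : ∀ i, Continuous fun y => CSext n s (pd i v) y z := fun i =>
      (CSext_contDiff hz (pd_contDiff i hv) (pd_compact i hc)).continuous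
    have h2 : Continuous fun y => Nf n s v y z := Nf_cont hz hv hc
    fun_prop
  have bE : ∀ y, |En2 n s v z y| ≤ (∑ i, M1 i ^ 2) + (z ^ (2 * s - 1) * (Q * M * ∫ w, kc n (bb n s) z w)) ^ 2 := by
    intro y
    rw [e, abs_of_nonneg (by positivity)]
    refine add_le_add (Finset.sum_le_sum fun i _ => ?_) ?_
    · rw [← sq_abs]
      exact pow_le_pow_left₀ (abs_nonneg _) (CSext_le hs hz (hM1 i) y) 2
    · rw [← sq_abs, abs_mul, abs_of_pos (Real.rpow_pos_of_pos hz _)]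
      have := bN y
      gcongr
  exact int_conv_bdd (Pker_integrable hs hz) cE bE x

lemma RHS_integrand (hs : 0 < s) {z : ℝ} (hz : 0 < z) {u : En n → ℝ}
    (hu : ContDiff ℝ (⊤ : ℕ∞) u) (huc : HasCompactSupport u) (x : En n) :
    Pconv n s z (fun y => (∑ i, ∑ j, (pd i (pd j (fun y' => CSext n s u y' z)) y) ^ 2)
        + ∑ i, (pd i (fun y' => deriv (CSext n s u y') z) y) ^ 2) x
      = ∑ j, Pconv n s z (En2 n s (pd j u) z) x := by
  unfold Pconv
  rw [← integral_finsetSum _ fun j _ => Pker_En2_int hs hz (pd_contDiff j hu) (pd_compact j huc) x]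
  congr 1; ext y
  rw [← Finset.mul_sum]
  congr 1
  unfold En2
  rw [Finset.sum_add_distrib, Finset.sum_comm]
  simp only [pd_deriv_CSext hs hz hu huc]
  congr 1
  refine Finset.sum_congr rfl fun j _ => Finset.sum_congr rfl fun i _ => ?_
  rw [CSext_pd hz hu huc i]

end
/-- **Fractional Bochner's formula, `ℬ`-form** (Euclidean case):
`½ Λ^s(|∇u|²) - ∇u·∇(Λ^s u) = β_s ∫₀^∞ (P_z^{(s)} ∗ (|∇²_x U|² + |∇_x ∂_z U|²)) z^{1-2s} dz`. -/
theorem fractional_Bochner_B (n : ℕ) (hn : 1 ≤ n) (s : ℝ) (hs0 : 0 < s) (hs1 : s < 1)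
    (u : En n → ℝ) (hu : ContDiff ℝ (⊤ : ℕ∞) u) (huc : HasCompactSupport u)
    (hint : ∫⁻ p in (univ : Set (En n)) ×ˢ Ioi (0 : ℝ),
      ENNReal.ofReal
        (p.2 ^ (1 - 2 * s) *
          ((∑ i, ∑ j, (pd i (pd j (fun y => CSext n s u y p.2)) p.1) ^ 2)
            + ∑ i, (pd i (fun y => deriv (CSext n s u y) p.2) p.1) ^ 2)) < ⊤) :
    ∀ x : En n,
      (1 / 2) * Lam n s (fun y => ∑ i, (pd i u y) ^ 2) x
          - ∑ i, pd i u x * pd i (Lam n s u) x =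
        betaS s *
          ∫ z in Ioi (0 : ℝ),
            Pconv n s z
              (fun y =>
                (∑ i, ∑ j, (pd i (pd j (fun y' => CSext n s u y' z)) y) ^ 2)
                  + ∑ i, (pd i (fun y' => deriv (CSext n s u y') z) y) ^ 2) x
              * z ^ (1 - 2 * s) := by
  intro x
  have hp : ∀ j, ContDiff ℝ (⊤ : ℕ∞) (pd j u) := fun j => pd_contDiff j hu
  have hpc : ∀ j, HasCompactSupport (pd j u) := fun j => pd_compact j huc
  have hq : ∀ j, ContDiff ℝ (⊤ : ℕ∞) (fun y => pd j u y ^ 2) := fun j => (hp j).pow 2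
  have hqc : ∀ j, HasCompactSupport (fun y => pd j u y ^ 2) := fun j => by
    have := (hpc j).mul_right (f' := pd j u)
    have e : (fun y => pd j u y ^ 2) = pd j u * pd j u := by ext y; simp [sq]
    rwa [e]
  have hSc : HasCompactSupport (fun y => ∑ i, pd i u y ^ 2) := by
    refine HasCompactSupport.of_support_subset_isCompact (K := ⋃ i, tsupport (fun y => pd i u y ^ 2))
      (isCompact_iUnion fun i => hqc i) fun y hy => ?_
    rw [Function.mem_support] at hy
    obtain ⟨i, _, hi⟩ := Finset.exists_ne_zero_of_sum_ne_zero hy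
    exact mem_iUnion.2 ⟨i, subset_tsupport _ hi⟩
  have hS : ContDiff ℝ (⊤ : ℕ∞) (fun y => ∑ i, pd i u y ^ 2) := ContDiff.sum fun i _ => hq i
  have hR : ∫ z in Ioi (0 : ℝ),
            Pconv n s z
              (fun y =>
                (∑ i, ∑ j, (pd i (pd j (fun y' => CSext n s u y' z)) y) ^ 2)
                  + ∑ i, (pd i (fun y' => deriv (CSext n s u y') z) y) ^ 2) x
              * z ^ (1 - 2 * s) = ∑ j, s * pns n s * Sq n s (pd j u) x := by
    have e : ∀ j, s * pns n s * Sq n s (pd j u) x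
        = ∫ z in Ioi 0, Pconv n s z (En2 n s (pd j u) z) x * z ^ (1 - 2 * s) := fun j =>
      (energy_id hn hs0 hs1 (hp j) (hpc j) x).2.symm
    simp only [e]
    rw [← integral_finsetSum _ fun j _ => (energy_id hn hs0 hs1 (hp j) (hpc j) x).1]
    refine setIntegral_congr_fun measurableSet_Ioi fun z hz => ?_
    rw [RHS_integrand hs0 hz hu huc x, Finset.sum_mul]
  rw [hR, Lam_eq hn hs0 hs1 hS hSc, Tf_sum hn hs0 hs1 hq hqc, Finset.mul_sum, Finset.mul_sum,
    Finset.mul_sum, ← Finset.sum_sub_distrib]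
  refine Finset.sum_congr rfl fun j _ => ?_
  rw [Lam_pd hn hs0 hs1 hu huc, Lam_eq hn hs0 hs1 (hp j) (hpc j), ← mul_assoc (betaS s), const_id hs0 hs1,
    ← Gamma_id hn hs0 hs1 (hp j) (hpc j) x]
  ring
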